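/- arXiv:1206.1100 — 2 statements merged into one kernel-verified Lean document; each statement's English description precedes it below -/
import Mathlib

section
/- For every τ ∈ ℍ∖E_D one has ξ_{2−2k}(F_{1−k,D})(τ) = D^{1/2−k} · f_{k,D}(τ) and 𝒟^{2k−1}(F_{1−k,D})(τ) = −((2k−2)!/(4π)^{2k−1}) · D^{1/2−k} · f_{k,D}(τ). -/
noncomputable section

open MeasureTheory

/-- The set of integral binary quadratic forms `[a,b,c]` of discriminant `D`. -/
def QD (D : ℤ) : Set (ℤ × ℤ × ℤ) := {q | q.2.1 ^ 2 - 4 * q.1 * q.2.2 = D}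

/-- `Q(τ,1) = a τ² + b τ + c`. -/
def Qval (q : ℤ × ℤ × ℤ) (τ : ℂ) : ℂ :=
  (q.1 : ℂ) * τ ^ 2 + (q.2.1 : ℂ) * τ + (q.2.2 : ℂ)

/-- `a|τ|² + b x + c` where `τ = x + iy`. -/
def Qell (q : ℤ × ℤ × ℤ) (τ : ℂ) : ℝ :=
  (q.1 : ℝ) * Complex.normSq τ + (q.2.1 : ℝ) * τ.re + (q.2.2 : ℝ)

/-- `ψ(v) = (1/2) ∫₀ᵛ u^(k-3/2) (1-u)^(-1/2) du`. -/
def psi (k : ℕ) (v : ℝ) : ℝ :=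
  (1 / 2) * ∫ u in (0:ℝ)..v, u ^ ((k : ℝ) - 3 / 2) * (1 - u) ^ (-(1:ℝ) / 2)

/-- real power of the integer `D`, as a complex number. -/
def Dpow (D : ℤ) (e : ℝ) : ℂ := (((D : ℝ) ^ e : ℝ) : ℂ)

/-- The summand of the series defining `F_{1-k,D}`. -/
def Fsummand (k : ℕ) (D : ℤ) (τ : ℂ) (q : ℤ × ℤ × ℤ) : ℂ :=
  ((Real.sign (Qell q τ) : ℝ) : ℂ) * Qval q τ ^ (k - 1) *
    ((psi k ((D : ℝ) * τ.im ^ 2 / Complex.normSq (Qval q τ)) : ℝ) : ℂ)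

/-- `F_{1-k,D}`. -/
def F (k : ℕ) (D : ℤ) (τ : ℂ) : ℂ :=
  (Dpow D (1 / 2 - (k : ℝ)) / (((Nat.choose (2 * k - 2) (k - 1) : ℝ) * Real.pi : ℝ) : ℂ)) *
    ∑' q : QD D, Fsummand k D τ (q : ℤ × ℤ × ℤ)

/-- `f_{k,D}`. -/
def fkD (k : ℕ) (D : ℤ) (τ : ℂ) : ℂ :=
  (Dpow D ((k : ℝ) - 1 / 2) / (((Nat.choose (2 * k - 2) (k - 1) : ℝ) * Real.pi : ℝ) : ℂ)) *
    ∑' q : QD D, Qval (q : ℤ × ℤ × ℤ) τ ^ (-(k : ℤ))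

/-- Action of `SL₂(ℤ)` on binary quadratic forms: `(Q ∘ γ)(X,Y) = Q(pX+qY, rX+sY)`. -/
def QAct (q : ℤ × ℤ × ℤ) (γ : Matrix.SpecialLinearGroup (Fin 2) ℤ) : ℤ × ℤ × ℤ :=
  (q.1 * (γ.1 0 0) ^ 2 + q.2.1 * (γ.1 0 0) * (γ.1 1 0) + q.2.2 * (γ.1 1 0) ^ 2,
   2 * q.1 * (γ.1 0 0) * (γ.1 0 1) + q.2.1 * ((γ.1 0 0) * (γ.1 1 1) + (γ.1 0 1) * (γ.1 1 0))
     + 2 * q.2.2 * (γ.1 1 0) * (γ.1 1 1),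
   q.1 * (γ.1 0 1) ^ 2 + q.2.1 * (γ.1 0 1) * (γ.1 1 1) + q.2.2 * (γ.1 1 1) ^ 2)

/-- A narrow class: an orbit of the `SL₂(ℤ)`-action on `QD D`. -/
def IsNarrowClass (D : ℤ) (𝒜 : Set (ℤ × ℤ × ℤ)) : Prop :=
  ∃ q₀ ∈ QD D, 𝒜 = {q | ∃ γ : Matrix.SpecialLinearGroup (Fin 2) ℤ, QAct q₀ γ = q}

/-- `F_{1-k,D,𝒜}`. -/
def FA (k : ℕ) (D : ℤ) (𝒜 : Set (ℤ × ℤ × ℤ)) (τ : ℂ) : ℂ :=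
  ((-1 : ℂ) ^ k * Dpow D (1 / 2 - (k : ℝ)) /
      (((Nat.choose (2 * k - 2) (k - 1) : ℝ) * Real.pi : ℝ) : ℂ)) *
    ∑' q : 𝒜, Fsummand k D τ (q : ℤ × ℤ × ℤ)

/-- `f_{k,D,𝒜}`. -/
def fA (k : ℕ) (D : ℤ) (𝒜 : Set (ℤ × ℤ × ℤ)) (τ : ℂ) : ℂ :=
  ((-1 : ℂ) ^ k * Dpow D ((k : ℝ) - 1 / 2) /
      (((Nat.choose (2 * k - 2) (k - 1) : ℝ) * Real.pi : ℝ) : ℂ)) *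
    ∑' q : 𝒜, Qval (q : ℤ × ℤ × ℤ) τ ^ (-(k : ℤ))

/-- Partial derivative in the real direction `x`. -/
def dxx (G : ℂ → ℂ) (τ : ℂ) : ℂ :=
  deriv (fun x : ℝ => G ((x : ℂ) + (τ.im : ℂ) * Complex.I)) τ.re

/-- Partial derivative in the imaginary direction `y`. -/
def dyy (G : ℂ → ℂ) (τ : ℂ) : ℂ :=
  deriv (fun y : ℝ => G ((τ.re : ℂ) + (y : ℂ) * Complex.I)) τ.im

/-- Wirtinger derivative `∂/∂τ̄ = (1/2)(∂/∂x + i ∂/∂y)`. -/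
def wirDbar (G : ℂ → ℂ) (τ : ℂ) : ℂ := (dxx G τ + Complex.I * dyy G τ) / 2

/-- Wirtinger derivative `∂/∂τ = (1/2)(∂/∂x - i ∂/∂y)`. -/
def wirD (G : ℂ → ℂ) (τ : ℂ) : ℂ := (dxx G τ - Complex.I * dyy G τ) / 2

/-- The operator `ξ_{2-2k}(G)(τ) = 2 i y^{2-2k} conj(∂G/∂τ̄)`. -/
def xiOp (k : ℕ) (G : ℂ → ℂ) (τ : ℂ) : ℂ :=
  2 * Complex.I * (τ.im : ℂ) ^ ((2 : ℤ) - 2 * (k : ℤ)) * (starRingEnd ℂ) (wirDbar G τ)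

/-- The operator `𝒟 = (1/(2πi)) ∂/∂τ`. -/
def Dop (G : ℂ → ℂ) : ℂ → ℂ := fun τ => (1 / (2 * (Real.pi : ℂ) * Complex.I)) * wirD G τ

/-- The weight `2-2k` hyperbolic Laplacian. -/
def DeltaOp (k : ℕ) (G : ℂ → ℂ) (τ : ℂ) : ℂ :=
  -(τ.im : ℂ) ^ 2 * (dxx (fun z => dxx G z) τ + dyy (fun z => dyy G z) τ)
    + Complex.I * ((2 : ℂ) - 2 * (k : ℂ)) * (τ.im : ℂ) * (dxx G τ + Complex.I * dyy G τ)

/-- `φ(v) = ∫₀ᵛ sin(u)^{2k-2} du`. -/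
def phi (k : ℕ) (v : ℝ) : ℝ := ∫ u in (0:ℝ)..v, Real.sin u ^ (2 * k - 2)

/-- `φ̂(τ) = τ^{k-1} sgn(x) φ(arctan|y/x|)`, with value `0` when `x = 0`. -/
def phiHat (k : ℕ) (τ : ℂ) : ℂ :=
  τ ^ (k - 1) * ((Real.sign τ.re : ℝ) : ℂ) *
    ((phi k (Real.arctan |τ.im / τ.re|) : ℝ) : ℂ)

/-- The non-holomorphic Eichler integral
`f^*(τ) = (2i)^{1-2k} ∫_{-τ̄}^{i∞} conj(f(-z̄)) (z+τ)^{2k-2} dz`,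
parametrized along the vertical path `z = -τ̄ + it`, `t ∈ (0,∞)`. -/
def fstar (k : ℕ) (f : ℂ → ℂ) (τ : ℂ) : ℂ :=
  (2 * Complex.I) ^ ((1 : ℤ) - 2 * (k : ℤ)) * Complex.I *
    ∫ t in Set.Ioi (0 : ℝ), (starRingEnd ℂ) (f (τ + (t : ℂ) * Complex.I)) *
      (((2 * τ.im + t : ℝ) : ℂ) * Complex.I) ^ (2 * k - 2)

/-- `a : ℕ → ℂ` is the sequence of Fourier coefficients of `f` (with `a n` the
coefficient of `e^{2πi(n+1)τ}`). -/
def HasFourier (a : ℕ → ℂ) (f : ℂ → ℂ) : Prop :=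
  ∀ τ : ℂ, 0 < τ.im →
    f τ = ∑' n : ℕ, a n * Complex.exp (2 * (Real.pi : ℂ) * Complex.I * ((n : ℂ) + 1) * τ)

/-- The holomorphic Eichler integral `ℰ_f(τ) = ∑_{n≥1} (a_n/n^{2k-1}) e^{2πinτ}`. -/
def EichlerE (k : ℕ) (a : ℕ → ℂ) (τ : ℂ) : ℂ :=
  ∑' n : ℕ, a n / ((n : ℂ) + 1) ^ (2 * k - 1) *
    Complex.exp (2 * (Real.pi : ℂ) * Complex.I * ((n : ℂ) + 1) * τ)

/-- `r_{a,b}(𝒜) = 1_{[Q_{a,b} ∈ 𝒜]} + (-1)^k 1_{[-Q_{a,b} ∈ 𝒜]}`. -/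
def rab (k : ℕ) (D : ℤ) (𝒜 : Set (ℤ × ℤ × ℤ)) (a b : ℤ) : ℝ :=
  Set.indicator 𝒜 1 (a, b, (b ^ 2 - D) / (4 * a)) +
    (-1 : ℝ) ^ k * Set.indicator 𝒜 1 (-a, -b, -((b ^ 2 - D) / (4 * a)))

/-- The constant `c_∞(𝒜)`. -/
def cInftyA (k : ℕ) (D : ℤ) (𝒜 : Set (ℤ × ℤ × ℤ)) : ℝ :=
  -(1 / (2 ^ (2 * k - 2) * (2 * (k : ℝ) - 1) * (Nat.choose (2 * k - 2) (k - 1) : ℝ))) *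
    ∑' n : ℕ, (1 / ((n : ℝ) + 1) ^ k) *
      ∑ b ∈ Finset.range (2 * (n + 1)),
        if (4 * ((n : ℤ) + 1)) ∣ ((b : ℤ) ^ 2 - D) then rab k D 𝒜 ((n : ℤ) + 1) (b : ℤ) else 0

/-- The constant `c_∞`. -/
def cInfty (k : ℕ) (D : ℤ) : ℝ :=
  -(1 / (2 ^ (2 * k - 3) * (2 * (k : ℝ) - 1) * (Nat.choose (2 * k - 2) (k - 1) : ℝ))) *
    ∑' n : ℕ, (1 / ((n : ℝ) + 1) ^ k) *
      (((Finset.range (2 * (n + 1))).filter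
        (fun b : ℕ => (4 * ((n : ℤ) + 1)) ∣ ((b : ℤ) ^ 2 - D))).card : ℝ)

/-- The weight `2-2k` Hecke operator `T_p`. -/
def heckeT (k : ℕ) (p : ℕ) (g : ℂ → ℂ) (τ : ℂ) : ℂ :=
  (p : ℂ) ^ ((1 : ℤ) - 2 * (k : ℤ)) * g ((p : ℂ) * τ) +
    (p : ℂ)⁻¹ * ∑ r ∈ Finset.range p, g ((τ + (r : ℂ)) / (p : ℂ))

open scoped Classical in
/-- The symbol `(D|p)`. -/
def legSym (D : ℤ) (p : ℕ) : ℤ :=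
  if (p : ℤ) ∣ D then 0
  else if p = 2 then (if D % 8 = 1 ∨ D % 8 = 7 then 1 else -1)
  else if ∃ m : ℤ, (p : ℤ) ∣ (m ^ 2 - D) then 1 else -1

/-- Primitive forms of discriminant `D`. -/
def QDprim (D : ℤ) : Set (ℤ × ℤ × ℤ) :=
  {q | q.2.1 ^ 2 - 4 * q.1 * q.2.2 = D ∧ Int.gcd q.1 (Int.gcd q.2.1 q.2.2) = 1}

/-- `F'_{1-k,D}`: the sum over primitive forms, with normalization `D^{(1-k)/2}`. -/
def Fprim (k : ℕ) (D : ℤ) (τ : ℂ) : ℂ :=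
  (Dpow D ((1 - (k : ℝ)) / 2) / (((Nat.choose (2 * k - 2) (k - 1) : ℝ) * Real.pi : ℝ) : ℂ)) *
    ∑' q : QDprim D, Fsummand k D τ (q : ℤ × ℤ × ℤ)

/-- The root `η_Q = (-b+√D)/(2a)`. -/
def etaQ (D : ℤ) (q : ℤ × ℤ × ℤ) : ℝ := (-(q.2.1 : ℝ) + Real.sqrt (D : ℝ)) / (2 * (q.1 : ℝ))

/-- The root `η'_Q = (-b-√D)/(2a)`. -/
def etaQ' (D : ℤ) (q : ℤ × ℤ × ℤ) : ℝ := (-(q.2.1 : ℝ) - Real.sqrt (D : ℝ)) / (2 * (q.1 : ℝ))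

/-- The scaling matrix `A_Q`. -/
def AQ (D : ℤ) (q : ℤ × ℤ × ℤ) : Matrix (Fin 2) (Fin 2) ℝ :=
  (1 / Real.sqrt |etaQ D q - etaQ' D q|) •
    !![1, -(etaQ' D q);
       -(Real.sign (etaQ D q - etaQ' D q)), Real.sign (etaQ D q - etaQ' D q) * etaQ D q]

/-- Real matrix associated to an element of `SL₂(ℤ)`. -/
def toR (γ : Matrix.SpecialLinearGroup (Fin 2) ℤ) : Matrix (Fin 2) (Fin 2) ℝ :=
  γ.1.map (fun n => (n : ℝ))

/-- Möbius action of a real `2×2` matrix on `ℂ`. -/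
def moeb (g : Matrix (Fin 2) (Fin 2) ℝ) (τ : ℂ) : ℂ :=
  ((g 0 0 : ℝ) * τ + (g 0 1 : ℝ)) / ((g 1 0 : ℝ) * τ + (g 1 1 : ℝ))

/-- Automorphy factor `j(g,τ) = cτ + d`. -/
def jfac (g : Matrix (Fin 2) (Fin 2) ℝ) (τ : ℂ) : ℂ :=
  ((g 1 0 : ℝ) : ℂ) * τ + ((g 1 1 : ℝ) : ℂ)

/-- `n`-th period `r_n(f) = ∫₀^∞ f(it) tⁿ dt`. -/
def periodR (f : ℂ → ℂ) (n : ℕ) : ℂ :=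
  ∫ t in Set.Ioi (0 : ℝ), f ((t : ℂ) * Complex.I) * (t : ℂ) ^ n

/-- The even period polynomial `r⁺(f;X)`. -/
def rPlus (k : ℕ) (f : ℂ → ℂ) : Polynomial ℂ :=
  ∑ m ∈ Finset.range k,
    Polynomial.C ((-1 : ℂ) ^ m * (Nat.choose (2 * k - 2) (2 * m) : ℂ) * periodR f (2 * m)) *
      Polynomial.X ^ (2 * k - 2 - 2 * m)

end

/-!
Near a point off `E_D` each summand of `F_{1-k,D}` is real-analytic, and its `z̄`-derivative is
`y^(2k-2)` times the conjugate of a holomorphic function, its shadow, which is a multiple of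
`Q(z,1)^(-k)`. Subtracting from the summand a non-holomorphic Eichler integral of its shadow, which
is a polynomial in `z` of degree at most `2k-2` with antiholomorphic coefficients, leaves a
holomorphic function. The series of these holomorphic functions converges locally uniformly, so
Weierstrass' theorem justifies applying both operators to `F_{1-k,D}` termwise.

For one form, write `Q = Q(z,1)`, `m = k-1`, `∂ = ∂/∂z` and `θ = Q ∂`. Bol's identity
`Q^(m+1) ∂^(2m+1) Q^m = θ ∏_{l=1}^m (θ² - l² D)` turns the iterated derivative into a polynomial in
`θ`. With `w = a|z|² + bx + c + i√D y` the phase `E = w / w̄` satisfies `θ E = √D E`, while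
`v = Dy²/|Q|² = (2 - E - E⁻¹)/4` and `θ` sends `sgn · ψ(v)` to `-(i/2)√D v^m`. The product kills
every power `E^j` with `0 < |j| ≤ m`, so only the constant term of `v^m` survives, leaving a
constant multiple of `Q^(-k)`.

Convergence rests on `|Q(z,1)| ≫ 1 + |b|` together with the divisor bound: for fixed `b` the
coefficient `a` divides `b² - D ≠ 0`.
-/

section WirtingerCalculus

open Complex
open scoped ComplexConjugate

/-- `f` is real-differentiable at `z` with differential `a dz + b dz̄`; thus `a` and `b` are the
values of the two Wirtinger derivatives `∂f/∂z` and `∂f/∂z̄` at `z`. -/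
def HasWirtingerDerivAt (f : ℂ → ℂ) (a b z : ℂ) : Prop :=
  HasFDerivAt f (a • ContinuousLinearMap.id ℝ ℂ + b • (conjCLE : ℂ →L[ℝ] ℂ)) z

variable {f g : ℂ → ℂ} {a b a' b' z : ℂ}

theorem hasWirtingerDerivAt_of_hasDerivAt (h : HasDerivAt f a z) : HasWirtingerDerivAt f a 0 z :=
  (h.hasFDerivAt.restrictScalars ℝ).congr_fderiv <| ContinuousLinearMap.ext fun w => by
    simp [mul_comm]

namespace HasWirtingerDerivAt

theorem hasDerivAt (h : HasWirtingerDerivAt f a 0 z) : HasDerivAt f a z := by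
  refine hasDerivAt_iff_hasFDerivAt.2 (hasFDerivAt_of_restrictScalars ℝ h ?_)
  ext w
  simp [mul_comm]

theorem congr_deriv (h : HasWirtingerDerivAt f a b z) (ha : a = a') (hb : b = b') :
    HasWirtingerDerivAt f a' b' z :=
  ha ▸ hb ▸ h

theorem congr_of_eqOn {U : Set ℂ} (h : HasWirtingerDerivAt f a b z) (hU : IsOpen U) (hz : z ∈ U)
    (hfg : Set.EqOn g f U) : HasWirtingerDerivAt g a b z :=
  HasFDerivAt.congr_of_eventuallyEq h (hfg.eventuallyEq_of_mem (hU.mem_nhds hz))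

theorem const (c z : ℂ) : HasWirtingerDerivAt (fun _ => c) 0 0 z :=
  hasWirtingerDerivAt_of_hasDerivAt (hasDerivAt_const z c)

theorem add (hf : HasWirtingerDerivAt f a b z) (hg : HasWirtingerDerivAt g a' b' z) :
    HasWirtingerDerivAt (fun z => f z + g z) (a + a') (b + b') z :=
  (HasFDerivAt.fun_add hf hg).congr_fderiv <| by module

theorem mul (hf : HasWirtingerDerivAt f a b z) (hg : HasWirtingerDerivAt g a' b' z) :
    HasWirtingerDerivAt (fun z => f z * g z) (a * g z + f z * a') (b * g z + f z * b') z :=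
  (HasFDerivAt.fun_mul hf hg).congr_fderiv <| by module

theorem const_mul (c : ℂ) (hf : HasWirtingerDerivAt f a b z) :
    HasWirtingerDerivAt (fun z => c * f z) (c * a) (c * b) z :=
  ((const c z).mul hf).congr_deriv (by ring) (by ring)

theorem sub (hf : HasWirtingerDerivAt f a b z) (hg : HasWirtingerDerivAt g a' b' z) :
    HasWirtingerDerivAt (fun z => f z - g z) (a - a') (b - b') z :=
  (HasFDerivAt.fun_sub hf hg).congr_fderiv <| by module

theorem sum {ι : Type*} {s : Finset ι} {f : ι → ℂ → ℂ} {a b : ι → ℂ}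
    (h : ∀ i ∈ s, HasWirtingerDerivAt (f i) (a i) (b i) z) :
    HasWirtingerDerivAt (fun z => ∑ i ∈ s, f i z) (∑ i ∈ s, a i) (∑ i ∈ s, b i) z :=
  (HasFDerivAt.fun_sum h).congr_fderiv <| ContinuousLinearMap.ext fun w => by
    simp [Finset.sum_add_distrib, Finset.sum_mul]

theorem star (h : HasWirtingerDerivAt f a b z) :
    HasWirtingerDerivAt (fun z => conj (f z)) (conj b) (conj a) z :=
  ((conjCLE : ℂ →L[ℝ] ℂ).hasFDerivAt.comp z h).congr_fderiv <|
    ContinuousLinearMap.ext fun w => by simp [add_comm]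

theorem comp {φ : ℂ → ℂ} {φ' : ℂ} (hφ : HasDerivAt φ φ' (f z))
    (hf : HasWirtingerDerivAt f a b z) :
    HasWirtingerDerivAt (fun z => φ (f z)) (φ' * a) (φ' * b) z :=
  ((hφ.hasFDerivAt.restrictScalars ℝ).comp z hf).congr_fderiv <|
    ContinuousLinearMap.ext fun w => by simp; ring

theorem zpow (h : HasWirtingerDerivAt f a b z) (hz : f z ≠ 0) (n : ℤ) :
    HasWirtingerDerivAt (fun z => f z ^ n) (n * f z ^ (n - 1) * a) (n * f z ^ (n - 1) * b) z :=
  h.comp (hasDerivAt_zpow n (f z) (.inl hz))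

theorem div (hf : HasWirtingerDerivAt f a b z) (hg : HasWirtingerDerivAt g a' b' z)
    (hz : g z ≠ 0) :
    HasWirtingerDerivAt (fun z => f z / g z) ((a * g z - f z * a') / g z ^ 2)
      ((b * g z - f z * b') / g z ^ 2) z := by
  simp only [div_eq_mul_inv, ← zpow_neg_one (g _)]
  refine (hf.mul (hg.zpow hz (-1))).congr_deriv ?_ ?_ <;>
  · simp only [zpow_neg_one, zpow_sub_one₀ hz]
    field_simp
    push_cast
    ring

theorem comp_ofReal {φ : ℝ → ℝ} {φ' : ℝ} {v : ℂ → ℝ} (hφ : HasDerivAt φ φ' (v z))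
    (h : HasWirtingerDerivAt (fun z => (v z : ℂ)) a b z) :
    HasWirtingerDerivAt (fun z => (φ (v z) : ℂ)) (φ' * a) (φ' * b) z := by
  have hv : HasFDerivAt v (reCLM.comp _) z := reCLM.hasFDerivAt.comp z h
  have hv_real := DFunLike.congr_fun (((ofRealCLM.hasFDerivAt (x := v z)).comp z hv).unique h)
  refine ((ofRealCLM.hasFDerivAt (x := φ (v z))).comp z
    (hφ.hasFDerivAt.comp z hv)).congr_fderiv (ContinuousLinearMap.ext fun w => ?_)
  have := hv_real w
  simp only [ContinuousLinearMap.comp_apply, ofRealCLM_apply, reCLM_apply, smul_apply, add_apply,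
    ContinuousLinearMap.toSpanSingleton_apply, smul_eq_mul, ofReal_mul] at this ⊢
  rw [this]
  simp
  ring

theorem im (z : ℂ) :
    HasWirtingerDerivAt (fun z => (z.im : ℂ)) (1 / (2 * I)) (-(1 / (2 * I))) z := by
  have hid := hasWirtingerDerivAt_of_hasDerivAt (hasDerivAt_id' z)
  refine (((hid.sub hid.star).const_mul (1 / (2 * I))).congr_deriv (by simp)
    (by simp)).congr_of_eqOn isOpen_univ (Set.mem_univ z) fun w _ => ?_
  simp only [sub_conj]
  push_cast
  field_simp

theorem dxx_eq (h : HasWirtingerDerivAt f a b z) : dxx f z = a + b := by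
  have hline : HasDerivAt (fun x : ℝ => (x : ℂ) + z.im * I) 1 z.re := by
    simpa using (ofRealCLM.hasDerivAt (x := z.re)).add_const ((z.im : ℂ) * I)
  rw [HasWirtingerDerivAt, ← re_add_im z] at h
  refine (h.comp_hasDerivAt z.re hline).deriv.trans ?_
  simp

theorem dyy_eq (h : HasWirtingerDerivAt f a b z) : dyy f z = I * (a - b) := by
  have hline : HasDerivAt (fun y : ℝ => (z.re : ℂ) + y * I) I z.im := by
    simpa using ((ofRealCLM.hasDerivAt (x := z.im)).mul_const I).const_add (z.re : ℂ)
  rw [HasWirtingerDerivAt, ← re_add_im z] at h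
  refine (h.comp_hasDerivAt z.im hline).deriv.trans ?_
  simp
  ring

theorem wirD_eq (h : HasWirtingerDerivAt f a b z) : wirD f z = a := by
  rw [wirD, h.dxx_eq, h.dyy_eq]
  linear_combination (b - a) / 2 * I_sq

theorem wirDbar_eq (h : HasWirtingerDerivAt f a b z) : wirDbar f z = b := by
  rw [wirDbar, h.dxx_eq, h.dyy_eq]
  linear_combination (a - b) / 2 * I_sq

end HasWirtingerDerivAt

/-- `h` is the `n`-th iterated `∂/∂z`-derivative of `f` on `U`, with only the real
differentiability needed to form the successive derivatives being required. -/
def HasIteratedWirDOn (U : Set ℂ) : ℕ → (ℂ → ℂ) → (ℂ → ℂ) → Prop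
  | 0, f, h => Set.EqOn f h U
  | n + 1, f, h => ∃ f' : ℂ → ℂ, (∀ z ∈ U, ∃ b, HasWirtingerDerivAt f (f' z) b z) ∧
      HasIteratedWirDOn U n f' h

namespace HasIteratedWirDOn

variable {U : Set ℂ} {n : ℕ} {h h' : ℂ → ℂ}

theorem succ {f' : ℂ → ℂ} (hf : ∀ z ∈ U, ∃ b, HasWirtingerDerivAt f (f' z) b z)
    (hf' : HasIteratedWirDOn U n f' h) : HasIteratedWirDOn U (n + 1) f h :=
  ⟨f', hf, hf'⟩

theorem congr_left (hU : IsOpen U) (hf : HasIteratedWirDOn U n f h) (hfg : Set.EqOn g f U) :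
    HasIteratedWirDOn U n g h := by
  cases n with
  | zero => exact hfg.trans hf
  | succ n =>
    obtain ⟨f', hf', hn⟩ := hf
    exact ⟨f', fun z hz => (hf' z hz).imp fun b hb => hb.congr_of_eqOn hU hz hfg, hn⟩

theorem congr_right (hf : HasIteratedWirDOn U n f h) (hh : Set.EqOn h h' U) :
    HasIteratedWirDOn U n f h' := by
  induction n generalizing f with
  | zero => exact Set.EqOn.trans hf hh
  | succ n ih => exact hf.imp fun _ hf' => ⟨hf'.1, ih hf'.2⟩

theorem add (hf : HasIteratedWirDOn U n f h) (hg : HasIteratedWirDOn U n g h') :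
    HasIteratedWirDOn U n (fun z => f z + g z) (fun z => h z + h' z) := by
  induction n generalizing f g with
  | zero => exact fun z hz => congr_arg₂ (· + ·) (hf hz) (hg hz)
  | succ n ih =>
    obtain ⟨f', hf', hfn⟩ := hf
    obtain ⟨g', hg', hgn⟩ := hg
    refine ⟨_, fun z hz => ?_, ih hfn hgn⟩
    obtain ⟨b, hb⟩ := hf' z hz
    obtain ⟨b', hb'⟩ := hg' z hz
    exact ⟨_, hb.add hb'⟩

theorem const_mul (c : ℂ) (hf : HasIteratedWirDOn U n f h) :
    HasIteratedWirDOn U n (fun z => c * f z) (fun z => c * h z) := by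
  induction n generalizing f with
  | zero => exact fun z hz => congr_arg (c * ·) (hf hz)
  | succ n ih =>
    obtain ⟨f', hf', hn⟩ := hf
    exact ⟨_, fun z hz => (hf' z hz).elim fun b hb => ⟨_, hb.const_mul c⟩, ih hn⟩

theorem iterate_deriv (hU : IsOpen U) (hf : DifferentiableOn ℂ f U) (n : ℕ) :
    HasIteratedWirDOn U n f (deriv^[n] f) := by
  induction n generalizing f with
  | zero => exact fun _ _ => rfl
  | succ n ih =>
    exact succ (fun z hz => ⟨0, hasWirtingerDerivAt_of_hasDerivAt
      (hf.differentiableAt (hU.mem_nhds hz)).hasDerivAt⟩) (ih (hf.deriv hU))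

theorem eqOn_of_eqOn (hU : IsOpen U) (hf : HasIteratedWirDOn U n f h)
    (hg : HasIteratedWirDOn U n g h') (hfg : Set.EqOn f g U) : Set.EqOn h h' U := by
  induction n generalizing f g with
  | zero => exact (Set.EqOn.symm hf).trans (hfg.trans hg)
  | succ n ih =>
    obtain ⟨f', hf', hfn⟩ := hf
    obtain ⟨g', hg', hgn⟩ := hg
    refine ih hfn hgn fun z hz => ?_
    obtain ⟨b, hb⟩ := hf' z hz
    obtain ⟨b', hb'⟩ := hg' z hz
    rw [← hb.wirD_eq, ← (hb'.congr_of_eqOn hU hz hfg).wirD_eq]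

theorem eqOn_iterate_Dop (hU : IsOpen U) (hf : HasIteratedWirDOn U n f h) :
    Set.EqOn (Dop^[n] f) (fun z => (1 / (2 * Real.pi * I)) ^ n * h z) U := by
  induction n generalizing f h with
  | zero => exact Set.EqOn.trans hf fun z _ => by simp
  | succ n ih =>
    obtain ⟨f', hf', hn⟩ := hf
    have hDop : Set.EqOn (Dop f) (fun z => 1 / (2 * Real.pi * I) * f' z) U := fun z hz => by
      obtain ⟨b, hb⟩ := hf' z hz
      rw [Dop, hb.wirD_eq]
    intro z hz
    rw [Function.iterate_succ_apply, ih ((hn.const_mul _).congr_left hU hDop) hz]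
    ring

end HasIteratedWirDOn

end WirtingerCalculus

section Bol

variable {U : Set ℂ} {f f₀ f₁ f₂ w w₁ w₂ Q Q' : ℂ → ℂ} {e Δ z B : ℂ} {m n : ℕ}

theorem HasIteratedWirDOn.affine_mul (hf : HasIteratedWirDOn U n f f₀) (hU : IsOpen U)
    (hQ' : ∀ z ∈ U, HasDerivAt Q' e z) (h₀ : ∀ z ∈ U, ∃ B, HasWirtingerDerivAt f₀ (f₁ z) B z) :
    HasIteratedWirDOn U (n + 1) (fun z => Q' z * f z)
      (fun z => Q' z * f₁ z + (n + 1) * e * f₀ z) := by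
  induction n generalizing f with
  | zero =>
    refine .succ (f' := fun z => e * f₀ z + Q' z * f₁ z) (fun z hz => ?_)
      fun z _ => by push_cast; ring
    obtain ⟨B, hB⟩ := h₀ z hz
    exact ⟨_, ((hasWirtingerDerivAt_of_hasDerivAt (hQ' z hz)).mul hB).congr_of_eqOn hU hz
      fun z hz => congr_arg _ (hf hz)⟩
  | succ n ih =>
    obtain ⟨f', hf', hn⟩ := id hf
    refine .succ (fun z hz => ?_) (((hf.const_mul e).add (ih hn)).congr_right
      fun z _ => by push_cast; ring)
    obtain ⟨B, hB⟩ := hf' z hz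
    exact ⟨_, (hasWirtingerDerivAt_of_hasDerivAt (hQ' z hz)).mul hB⟩

theorem HasIteratedWirDOn.quadratic_mul (hf : HasIteratedWirDOn U n f f₀) (hU : IsOpen U)
    (hQ : ∀ z ∈ U, HasDerivAt Q (Q' z) z) (hQ' : ∀ z ∈ U, HasDerivAt Q' e z)
    (h₀ : ∀ z ∈ U, ∃ B, HasWirtingerDerivAt f₀ (f₁ z) B z)
    (h₁ : ∀ z ∈ U, ∃ B, HasWirtingerDerivAt f₁ (f₂ z) B z) :
    HasIteratedWirDOn U (n + 2) (fun z => Q z * f z)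
      (fun z => Q z * f₂ z + (n + 2) * Q' z * f₁ z + (n + 2) * (n + 1) / 2 * e * f₀ z) := by
  induction n generalizing f with
  | zero =>
    have hf₀ : HasIteratedWirDOn U 0 f₀ f₀ := fun _ _ => rfl
    have hQf₁ : HasIteratedWirDOn U 1 (fun z => Q z * f₁ z)
        (fun z => Q' z * f₁ z + Q z * f₂ z) :=
      .succ (fun z hz => (h₁ z hz).elim fun B hB =>
        ⟨_, (hasWirtingerDerivAt_of_hasDerivAt (hQ z hz)).mul hB⟩) fun _ _ => rfl
    refine .succ (fun z hz => ?_) (((hf₀.affine_mul hU hQ' h₀).add hQf₁).congr_right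
      fun z _ => by push_cast; ring)
    obtain ⟨B, hB⟩ := h₀ z hz
    exact ⟨_, ((hasWirtingerDerivAt_of_hasDerivAt (hQ z hz)).mul hB).congr_of_eqOn hU hz
      fun z hz => congr_arg _ (hf hz)⟩
  | succ n ih =>
    obtain ⟨f', hf', hn⟩ := id hf
    refine .succ (fun z hz => ?_) (((hf.affine_mul hU hQ' h₀).add (ih hn)).congr_right
      fun z _ => by push_cast; ring)
    obtain ⟨B, hB⟩ := hf' z hz
    exact ⟨_, (hasWirtingerDerivAt_of_hasDerivAt (hQ z hz)).mul hB⟩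

theorem HasWirtingerDerivAt.zpow_mul {w₁ Q' : ℂ} (hw : HasWirtingerDerivAt w (w₁ / Q z) B z)
    (hQ : HasDerivAt Q Q' z) (hQ₀ : Q z ≠ 0) (n : ℤ) :
    ∃ B, HasWirtingerDerivAt (fun z => Q z ^ n * w z)
      (Q z ^ (n - 1) * (w₁ + n * Q' * w z)) B z := by
  refine ⟨_, (((hasWirtingerDerivAt_of_hasDerivAt hQ).zpow hQ₀ n).mul hw).congr_deriv ?_ rfl⟩
  rw [zpow_sub_one₀ hQ₀]
  field_simp
  ring

-- Bol's identity `Q^(m+1) ∂^(2m+1) Q^m = θ ∏ (θ² - l² Δ)`, `θ = Q ∂`, passes from `m` to `m + 1`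
-- by one more quadratic factor; here `w₁ = θ w` and `w₂ = θ² w`.
theorem HasIteratedWirDOn.bol_step
    (hf : HasIteratedWirDOn U (2 * m + 1) f (fun z => Q z ^ (-(m + 1) : ℤ) * w z))
    (hU : IsOpen U) (hQ₀ : ∀ z ∈ U, Q z ≠ 0) (hQ : ∀ z ∈ U, HasDerivAt Q (Q' z) z)
    (hQ' : ∀ z ∈ U, HasDerivAt Q' e z) (hΔ : ∀ z ∈ U, Q' z ^ 2 - 2 * e * Q z = Δ)
    (hw : ∀ z ∈ U, ∃ B, HasWirtingerDerivAt w (w₁ z / Q z) B z)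
    (hw₁ : ∀ z ∈ U, ∃ B, HasWirtingerDerivAt w₁ (w₂ z / Q z) B z) :
    HasIteratedWirDOn U (2 * (m + 1) + 1) (fun z => Q z * f z)
      (fun z => Q z ^ (-(m + 2) : ℤ) * (w₂ z - (m + 1) ^ 2 * Δ * w z)) := by
  set v : ℂ → ℂ := fun z => w₁ z - (m + 1) * (Q' z * w z)
  set v₁ : ℂ → ℂ := fun z => w₂ z - (m + 1) * (e * Q z * w z + Q' z * w₁ z)
  have hv : ∀ z ∈ U, ∃ B, HasWirtingerDerivAt v (v₁ z / Q z) B z := fun z hz => by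
    obtain ⟨B, hB⟩ := hw z hz
    obtain ⟨B₁, hB₁⟩ := hw₁ z hz
    refine ⟨_, (hB₁.sub (((hasWirtingerDerivAt_of_hasDerivAt (hQ' z hz)).mul hB).const_mul
      (m + 1))).congr_deriv ?_ rfl⟩
    have := hQ₀ z hz
    simp only [v₁]
    field_simp
  have h₀ : ∀ z ∈ U, ∃ B, HasWirtingerDerivAt (fun z => Q z ^ (-(m + 1) : ℤ) * w z)
      (Q z ^ (-(m + 2) : ℤ) * v z) B z := fun z hz => by
    obtain ⟨B, hB⟩ := hw z hz
    obtain ⟨B', hB'⟩ := hB.zpow_mul (hQ z hz) (hQ₀ z hz) (-(m + 1))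
    refine ⟨B', hB'.congr_deriv ?_ rfl⟩
    rw [show (-(m + 1) - 1 : ℤ) = -(m + 2) by ring]
    simp only [v]
    push_cast
    ring
  have h₁ : ∀ z ∈ U, ∃ B, HasWirtingerDerivAt (fun z => Q z ^ (-(m + 2) : ℤ) * v z)
      (Q z ^ (-(m + 2) - 1 : ℤ) * (v₁ z - (m + 2) * Q' z * v z)) B z := fun z hz => by
    obtain ⟨B, hB⟩ := hv z hz
    obtain ⟨B', hB'⟩ := hB.zpow_mul (hQ z hz) (hQ₀ z hz) (-(m + 2))
    exact ⟨B', hB'.congr_deriv (by push_cast; ring) rfl⟩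
  refine (hf.quadratic_mul hU hQ hQ' h₀ h₁).congr_right fun z hz => ?_
  have := hQ₀ z hz
  simp only [v, v₁, ← hΔ z hz, zpow_sub_one₀ this,
    show (-(m + 1) : ℤ) = -(m + 2) + 1 by ring, zpow_add_one₀ this]
  push_cast
  field_simp
  ring

theorem HasIteratedWirDOn.bol {ι : Type*} {s : Finset ι} {coeff ev : ι → ℂ} {eig : ι → ℂ → ℂ}
    (hU : IsOpen U) (hQ₀ : ∀ z ∈ U, Q z ≠ 0) (hQ : ∀ z ∈ U, HasDerivAt Q (Q' z) z)
    (hQ' : ∀ z ∈ U, HasDerivAt Q' e z) (hΔ : ∀ z ∈ U, Q' z ^ 2 - 2 * e * Q z = Δ)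
    (heig : ∀ i ∈ s, ∀ z ∈ U, ∃ B, HasWirtingerDerivAt (eig i) (ev i * eig i z / Q z) B z)
    (hf : ∀ z ∈ U, ∃ B, HasWirtingerDerivAt f ((∑ i ∈ s, coeff i * eig i z) / Q z) B z) (m : ℕ) :
    HasIteratedWirDOn U (2 * m + 1) (fun z => Q z ^ m * f z) (fun z => Q z ^ (-(m + 1) : ℤ) *
      ∑ i ∈ s, coeff i * (∏ l ∈ Finset.range m, (ev i ^ 2 - (l + 1) ^ 2 * Δ)) * eig i z) := by
  have hsum (d : ι → ℂ) (z) (hz : z ∈ U) : ∃ B, HasWirtingerDerivAt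
      (fun z => ∑ i ∈ s, d i * eig i z) ((∑ i ∈ s, d i * ev i * eig i z) / Q z) B z := by
    choose! B hB using fun i hi => heig i hi z hz
    refine ⟨_, (HasWirtingerDerivAt.sum fun i hi => (hB i hi).const_mul (d i)).congr_deriv ?_ rfl⟩
    rw [Finset.sum_div]
    exact Finset.sum_congr rfl fun i _ => by ring
  induction m with
  | zero =>
    exact .congr_left hU (.succ hf fun z _ => by simp [div_eq_inv_mul]) fun z _ => by simp
  | succ m ih =>
    refine ((ih.bol_step hU hQ₀ hQ hQ' hΔ (hsum _) (hsum _)).congr_left hU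
      fun z _ => by ring).congr_right fun z _ => ?_
    simp only [Finset.prod_range_succ, Finset.mul_sum, ← Finset.sum_sub_distrib]
    rw [show (-((m + 1 : ℕ) + 1) : ℤ) = -(m + 2) by push_cast; ring]
    exact Finset.sum_congr rfl fun i _ => by ring

end Bol

section EichlerIntegral

open Complex Metric
open scoped ComplexConjugate

variable {c z : ℂ} {r M : ℝ} {g : ℂ → ℂ}

/-- The primitive `∫_c^z g` vanishing at `c`, computed along the segment from `c` to `z`. -/
noncomputable def segmentPrimitive (c : ℂ) (g : ℂ → ℂ) (z : ℂ) : ℂ :=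
  (z - c) * ∫ t in (0 : ℝ)..1, g (c + t • (z - c))

theorem add_smul_sub_mem_ball (hz : z ∈ ball c r) {t : ℝ} (ht : t ∈ Set.Icc (0 : ℝ) 1) :
    c + t • (z - c) ∈ ball c r :=
  (convex_ball c r).add_smul_sub_mem (mem_ball_self (pos_of_mem_ball hz)) hz ht

theorem continuousOn_comp_segment (hg : ContinuousOn g (ball c r)) (hz : z ∈ ball c r) :
    ContinuousOn (fun t : ℝ => g (c + t • (z - c))) (Set.Icc 0 1) :=
  hg.comp (by fun_prop) fun _ ht => add_smul_sub_mem_ball hz ht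

theorem hasDerivAt_segmentPrimitive (hg : DifferentiableOn ℂ g (ball c r)) (hz : z ∈ ball c r) :
    HasDerivAt (segmentPrimitive c g) (g z) z := by
  obtain ⟨P, hP⟩ := hg.isExactOn_ball
  have heq : Set.EqOn (segmentPrimitive c g) (fun z => P z - P c) (ball c r) := fun w hw => by
    simpa [segmentPrimitive] using intervalIntegral.integral_unitInterval_deriv_eq_sub
      (continuousOn_comp_segment hg.continuousOn hw) fun t ht => hP _ (add_smul_sub_mem_ball hw ht)
  exact ((hP z hz).sub_const (P c)).congr_of_eventuallyEq
    (heq.eventuallyEq_of_mem (isOpen_ball.mem_nhds hz))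

theorem norm_segmentPrimitive_le (hM : ∀ z ∈ ball c r, ‖g z‖ ≤ M) (hz : z ∈ ball c r) :
    ‖segmentPrimitive c g z‖ ≤ r * M := by
  rw [segmentPrimitive, norm_mul]
  have hint : ‖∫ t in (0 : ℝ)..1, g (c + t • (z - c))‖ ≤ M * |1 - 0| :=
    intervalIntegral.norm_integral_le_of_norm_le_const fun t ht => hM _
      (add_smul_sub_mem_ball hz (Set.Ioc_subset_Icc_self (Set.uIoc_of_le (zero_le_one' ℝ) ▸ ht)))
  rw [sub_zero, abs_one, mul_one] at hint
  exact mul_le_mul (mem_ball_iff_norm.1 hz).le hint (norm_nonneg _) (pos_of_mem_ball hz).le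

theorem hasSum_segmentPrimitive {ι : Type*} [Countable ι] {g : ι → ℂ → ℂ} {M : ι → ℝ}
    (hM : Summable M) (hgM : ∀ i, ∀ z ∈ ball c r, ‖g i z‖ ≤ M i)
    (hg : ∀ i, ContinuousOn (g i) (ball c r)) (hz : z ∈ ball c r) :
    HasSum (fun i => segmentPrimitive c (g i) z) (segmentPrimitive c (fun z => ∑' i, g i z) z) := by
  have hmem {t : ℝ} (ht : t ∈ Set.uIoc 0 1) : c + t • (z - c) ∈ ball c r :=
    add_smul_sub_mem_ball hz (Set.Ioc_subset_Icc_self (Set.uIoc_of_le (zero_le_one' ℝ) ▸ ht))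
  refine (intervalIntegral.hasSum_integral_of_dominated_convergence (fun i _ => M i) (fun i => ?_)
    (fun i => .of_forall fun t ht => hgM i _ (hmem ht)) (.of_forall fun _ _ => hM)
    intervalIntegrable_const (.of_forall fun t ht => ?_)).mul_left (z - c)
  · rw [Set.uIoc_of_le zero_le_one]
    exact ((continuousOn_comp_segment (hg i) hz).mono
      Set.Ioc_subset_Icc_self).aestronglyMeasurable measurableSet_Ioc
  · exact (Summable.of_norm_bounded hM fun i => hgM i _ (hmem ht)).hasSum

/-- The non-holomorphic Eichler integral `conj ∫_c^z g(t) ((t - z̄) / (2i))^N dt`, expanded by the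
binomial theorem into products of powers of `z` and conjugates of holomorphic primitives. -/
noncomputable def eichlerIntegral (c : ℂ) (N : ℕ) (g : ℂ → ℂ) (z : ℂ) : ℂ :=
  ∑ j ∈ Finset.range (N + 1), N.choose j * (1 / (2 * I)) ^ j * (z ^ j *
    conj (segmentPrimitive c (fun t => (t / (2 * I)) ^ (N - j) * g t) z))

theorem differentiableOn_div_two_I_pow_mul (hg : DifferentiableOn ℂ g (ball c r)) (n : ℕ) :
    DifferentiableOn ℂ (fun t => (t / (2 * I)) ^ n * g t) (ball c r) := by
  fun_prop

theorem norm_div_two_I_pow_mul_le (hM : ∀ z ∈ ball c r, ‖g z‖ ≤ M) (n : ℕ) :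
    ∀ z ∈ ball c r, ‖(z / (2 * I)) ^ n * g z‖ ≤ (‖c‖ + r) ^ n * M := fun z hz => by
  have hz2 : ‖z / (2 * I)‖ ≤ ‖c‖ + r := by
    have := norm_le_norm_add_norm_sub' z c
    have := mem_ball_iff_norm.1 hz
    simp only [norm_div, norm_mul, norm_I, norm_ofNat, mul_one]
    linarith [norm_nonneg z]
  rw [norm_mul, norm_pow]
  exact mul_le_mul (pow_le_pow_left₀ (norm_nonneg _) hz2 n) (hM z hz) (norm_nonneg _)
    (pow_nonneg ((norm_nonneg _).trans hz2) n)

theorem hasWirtingerDerivAt_pow_mul_conj {P : ℂ → ℂ} {P' : ℂ} (hP : HasDerivAt P P' z) (j : ℕ) :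
    HasWirtingerDerivAt (fun z => z ^ j * conj (P z)) (j * z ^ (j - 1) * conj (P z))
      (z ^ j * conj P') z :=
  ((hasWirtingerDerivAt_of_hasDerivAt (hasDerivAt_pow j z)).mul
    (hasWirtingerDerivAt_of_hasDerivAt hP).star).congr_deriv (by simp) (by simp)

theorem hasIteratedWirDOn_pow_mul_conj {U : Set ℂ} {P : ℂ → ℂ} (hU : IsOpen U)
    (hP : DifferentiableOn ℂ P U) {N j : ℕ} (hj : j ≤ N) :
    HasIteratedWirDOn U (N + 1) (fun z => z ^ j * conj (P z)) (fun _ => 0) := by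
  have hderiv (j : ℕ) {z} (hz : z ∈ U) := hasWirtingerDerivAt_pow_mul_conj
    (hP.differentiableAt (hU.mem_nhds hz)).hasDerivAt j
  induction N generalizing j with
  | zero =>
    obtain rfl : j = 0 := Nat.le_zero.1 hj
    exact .succ (fun z hz => ⟨_, hderiv 0 hz⟩) fun z _ => by simp
  | succ N ih =>
    refine .succ (fun z hz => ⟨_, (hderiv j hz).congr_deriv (mul_assoc _ _ _) rfl⟩) ?_
    exact ((ih (Nat.sub_le_of_le_add hj)).const_mul j).congr_right fun _ _ => mul_zero _

theorem HasIteratedWirDOn.finset_sum {ι : Type*} {U : Set ℂ} {n : ℕ} {s : Finset ι}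
    {f h : ι → ℂ → ℂ} (hf : ∀ i ∈ s, HasIteratedWirDOn U n (f i) (h i)) :
    HasIteratedWirDOn U n (fun z => ∑ i ∈ s, f i z) (fun z => ∑ i ∈ s, h i z) := by
  classical
  induction s using Finset.induction_on with
  | empty =>
    simp only [Finset.sum_empty]
    induction n with
    | zero => exact fun _ _ => rfl
    | succ n ih => exact .succ (fun z _ => ⟨0, .const 0 z⟩) (ih (by simp))
  | insert i s hi ih =>
    simp only [Finset.sum_insert hi]
    exact (hf i (Finset.mem_insert_self i s)).add
      (ih fun j hj => hf j (Finset.mem_insert_of_mem hj))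

theorem hasIteratedWirDOn_eichlerIntegral (hg : DifferentiableOn ℂ g (ball c r)) (N : ℕ) :
    HasIteratedWirDOn (ball c r) (N + 1) (eichlerIntegral c N g) (fun _ => 0) := by
  refine (HasIteratedWirDOn.finset_sum fun j hj => (hasIteratedWirDOn_pow_mul_conj isOpen_ball
    (fun z hz => (hasDerivAt_segmentPrimitive (differentiableOn_div_two_I_pow_mul hg (N - j))
      hz).differentiableAt.differentiableWithinAt) (Finset.mem_range_succ_iff.1 hj)).const_mul
        _).congr_right fun z _ => ?_
  simp

theorem hasWirtingerDerivAt_eichlerIntegral (hg : DifferentiableOn ℂ g (ball c r)) (N : ℕ)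
    (hz : z ∈ ball c r) :
    ∃ a, HasWirtingerDerivAt (eichlerIntegral c N g) a ((z.im : ℂ) ^ N * conj (g z)) z := by
  refine ⟨_, (HasWirtingerDerivAt.sum fun j _ => (hasWirtingerDerivAt_pow_mul_conj
    (hasDerivAt_segmentPrimitive (differentiableOn_div_two_I_pow_mul hg (N - j)) hz) j).const_mul
      (N.choose j * (1 / (2 * I)) ^ j)).congr_deriv rfl ?_⟩
  have him : (z.im : ℂ) = z / (2 * I) + -(conj z / (2 * I)) := by
    rw [im_eq_sub_conj]; ring
  rw [him, add_pow, Finset.sum_mul]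
  refine Finset.sum_congr rfl fun j _ => ?_
  simp only [map_mul, map_pow, map_div₀, conj_I, map_ofNat, mul_neg, div_neg]
  ring

theorem norm_eichlerIntegral_le (c : ℂ) (r : ℝ) (N : ℕ) : ∃ C : ℝ, ∀ (g : ℂ → ℂ) (M : ℝ),
    (∀ z ∈ ball c r, ‖g z‖ ≤ M) → ∀ z ∈ ball c r, ‖eichlerIntegral c N g z‖ ≤ C * M := by
  refine ⟨∑ j ∈ Finset.range (N + 1), ‖(N.choose j * (1 / (2 * I)) ^ j : ℂ)‖ *
    ((‖c‖ + r) ^ j * (r * (‖c‖ + r) ^ (N - j))), fun g M hM z hz => ?_⟩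
  rw [Finset.sum_mul]
  refine norm_sum_le_of_le _ fun j _ => ?_
  have hz' : ‖z‖ ≤ ‖c‖ + r := by
    have := norm_le_norm_add_norm_sub' z c
    have := mem_ball_iff_norm.1 hz
    linarith
  have hprim := norm_segmentPrimitive_le (norm_div_two_I_pow_mul_le hM (N - j)) hz
  rw [← mul_assoc r] at hprim
  rw [norm_mul, norm_mul (z ^ j), norm_pow z, RCLike.norm_conj, mul_assoc _ _ M, mul_assoc _ _ M]
  have := (norm_nonneg z).trans hz'
  gcongr

theorem hasSum_eichlerIntegral {ι : Type*} [Countable ι] {g : ι → ℂ → ℂ} {M : ι → ℝ}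
    (hM : Summable M) (hgM : ∀ i, ∀ z ∈ ball c r, ‖g i z‖ ≤ M i)
    (hg : ∀ i, DifferentiableOn ℂ (g i) (ball c r)) (N : ℕ) (hz : z ∈ ball c r) :
    HasSum (fun i => eichlerIntegral c N (g i) z)
      (eichlerIntegral c N (fun z => ∑' i, g i z) z) := by
  refine hasSum_sum fun j _ => ((HasSum.map ?_ (starRingEnd ℂ)
    continuous_conj).mul_left _).mul_left _
  simpa only [tsum_mul_left] using hasSum_segmentPrimitive (hM.mul_left ((‖c‖ + r) ^ (N - j)))
    (fun i => norm_div_two_I_pow_mul_le (hgM i) (N - j))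
    (fun i => (differentiableOn_div_two_I_pow_mul (hg i) (N - j)).continuousOn) hz

end EichlerIntegral

section TermwiseDifferentiation

open Complex Metric
open scoped ComplexConjugate

/-- `G` is real-differentiable on `U` with `∂G/∂z̄ = y^N conj g`, i.e. `g` is, up to a factor
`2i`, the image of `G` under `ξ_{-N}`. -/
def HasShadowOn (U : Set ℂ) (N : ℕ) (G g : ℂ → ℂ) : Prop :=
  ∀ z ∈ U, ∃ a, HasWirtingerDerivAt G a ((z.im : ℂ) ^ N * conj (g z)) z

theorem tendstoLocallyUniformlyOn_iterate_deriv {ι : Type*} {φ : Filter ι} [φ.NeBot] {U : Set ℂ}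
    {f : ι → ℂ → ℂ} {p : ℂ → ℂ} (hU : IsOpen U) (hf : TendstoLocallyUniformlyOn f p φ U)
    (hd : ∀ᶠ i in φ, DifferentiableOn ℂ (f i) U) (n : ℕ) :
    TendstoLocallyUniformlyOn (fun i => deriv^[n] (f i)) (deriv^[n] p) φ U := by
  induction n generalizing f p with
  | zero => exact hf
  | succ _ ih => exact ih (hf.deriv hd hU) (hd.mono fun i hi => hi.deriv hU)

theorem hasIteratedWirDOn_tsum_of_summable_norm {ι : Type*} {U : Set ℂ} {n : ℕ}
    {p H : ι → ℂ → ℂ} {M : ι → ℝ} (hU : IsOpen U) (hM : Summable M)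
    (hpM : ∀ i, ∀ z ∈ U, ‖p i z‖ ≤ M i) (hp : ∀ i, DifferentiableOn ℂ (p i) U)
    (hH : ∀ i, HasIteratedWirDOn U n (p i) (H i)) :
    HasIteratedWirDOn U n (fun z => ∑' i, p i z) (fun z => ∑' i, H i z) := by
  have hlim := tendstoLocallyUniformlyOn_iterate_deriv hU
    (tendstoUniformlyOn_tsum hM hpM).tendstoLocallyUniformlyOn
    (.of_forall fun s => .fun_sum fun i _ => hp i) n
  refine (HasIteratedWirDOn.iterate_deriv hU
    (differentiableOn_tsum_of_summable_norm hM hp hU hpM) n).congr_right fun z hz => ?_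
  have hpartial (s : Finset ι) : (deriv^[n] fun z => ∑ i ∈ s, p i z) z = ∑ i ∈ s, H i z :=
    (HasIteratedWirDOn.iterate_deriv hU (.fun_sum fun i _ => hp i) n).eqOn_of_eqOn hU
      (.finset_sum fun i _ => hH i) (fun _ _ => rfl) hz
  have hsum : HasSum (fun i => H i z) ((deriv^[n] fun w => ∑' i, p i w) z) := by
    simpa only [HasSum, SummationFilter.unconditional_filter, hpartial] using hlim.tendsto_at hz
  exact hsum.tsum_eq.symm

theorem exists_summable_norm_sub_eichlerIntegral_le {ι : Type*} {c : ℂ} {r : ℝ} (N : ℕ)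
    {G g : ι → ℂ → ℂ} {M : ι → ℝ} (hM : Summable M)
    (hGM : ∀ i, ∀ z ∈ ball c r, ‖G i z‖ ≤ M i) (hgM : ∀ i, ∀ z ∈ ball c r, ‖g i z‖ ≤ M i) :
    ∃ M' : ι → ℝ, Summable M' ∧
      ∀ i, ∀ z ∈ ball c r, ‖G i z - eichlerIntegral c N (g i) z‖ ≤ M' i := by
  obtain ⟨C, hC⟩ := norm_eichlerIntegral_le c r N
  exact ⟨fun i => M i + C * M i, hM.add (hM.mul_left C), fun i z hz =>
    (norm_sub_le _ _).trans (add_le_add (hGM i z hz) (hC _ _ (hgM i) z hz))⟩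

variable {ι : Type*} [Countable ι] {c : ℂ} {r : ℝ} {N : ℕ} {G g H : ι → ℂ → ℂ} {M : ι → ℝ}

theorem HasShadowOn.differentiableOn_sub_eichlerIntegral {G g : ℂ → ℂ}
    (hG : HasShadowOn (ball c r) N G g) (hg : DifferentiableOn ℂ g (ball c r)) :
    DifferentiableOn ℂ (fun z => G z - eichlerIntegral c N g z) (ball c r) := fun z hz => by
  obtain ⟨a, ha⟩ := hG z hz
  obtain ⟨b, hb⟩ := hasWirtingerDerivAt_eichlerIntegral hg N hz
  exact ((ha.sub hb).congr_deriv rfl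
    (sub_self _)).hasDerivAt.differentiableAt.differentiableWithinAt

theorem eqOn_tsum_eichlerIntegral (hM : Summable M) (hGM : ∀ i, ∀ z ∈ ball c r, ‖G i z‖ ≤ M i)
    (hgM : ∀ i, ∀ z ∈ ball c r, ‖g i z‖ ≤ M i) (hg : ∀ i, DifferentiableOn ℂ (g i) (ball c r)) :
    Set.EqOn (fun z => ∑' i, G i z) (fun z => (∑' i, (G i z - eichlerIntegral c N (g i) z)) +
      eichlerIntegral c N (fun z => ∑' i, g i z) z) (ball c r) := fun z hz => by
  have hE := hasSum_eichlerIntegral hM hgM hg N hz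
  have hG : Summable fun i => G i z := .of_norm_bounded hM fun i => hGM i z hz
  simp only [hG.tsum_sub hE.summable, hE.tsum_eq, sub_add_cancel]

theorem HasShadowOn.tsum (hM : Summable M) (hGM : ∀ i, ∀ z ∈ ball c r, ‖G i z‖ ≤ M i)
    (hgM : ∀ i, ∀ z ∈ ball c r, ‖g i z‖ ≤ M i) (hg : ∀ i, DifferentiableOn ℂ (g i) (ball c r))
    (hG : ∀ i, HasShadowOn (ball c r) N (G i) (g i)) :
    HasShadowOn (ball c r) N (fun z => ∑' i, G i z) (fun z => ∑' i, g i z) := fun z hz => by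
  obtain ⟨M', hM', hpM'⟩ := exists_summable_norm_sub_eichlerIntegral_le N hM hGM hgM
  have hp := differentiableOn_tsum_of_summable_norm hM'
    (fun i => (hG i).differentiableOn_sub_eichlerIntegral (hg i)) isOpen_ball hpM'
  obtain ⟨a, ha⟩ := hasWirtingerDerivAt_eichlerIntegral
    (differentiableOn_tsum_of_summable_norm hM hg isOpen_ball hgM) N hz
  exact ⟨_, (((hasWirtingerDerivAt_of_hasDerivAt (hp.differentiableAt
    (isOpen_ball.mem_nhds hz)).hasDerivAt).add ha).congr_deriv rfl (zero_add _)).congr_of_eqOn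
      isOpen_ball hz (eqOn_tsum_eichlerIntegral hM hGM hgM hg)⟩

-- A uniform limit of non-holomorphic functions cannot be differentiated termwise, but subtracting
-- the Eichler integrals of the shadows leaves a series of holomorphic functions.
theorem HasIteratedWirDOn.tsum (hM : Summable M) (hGM : ∀ i, ∀ z ∈ ball c r, ‖G i z‖ ≤ M i)
    (hgM : ∀ i, ∀ z ∈ ball c r, ‖g i z‖ ≤ M i) (hg : ∀ i, DifferentiableOn ℂ (g i) (ball c r))
    (hG : ∀ i, HasShadowOn (ball c r) N (G i) (g i))
    (hH : ∀ i, HasIteratedWirDOn (ball c r) (N + 1) (G i) (H i)) :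
    HasIteratedWirDOn (ball c r) (N + 1) (fun z => ∑' i, G i z) (fun z => ∑' i, H i z) := by
  obtain ⟨M', hM', hpM'⟩ := exists_summable_norm_sub_eichlerIntegral_le N hM hGM hgM
  have hp (i : ι) : HasIteratedWirDOn (ball c r) (N + 1)
      (fun z => G i z - eichlerIntegral c N (g i) z) (H i) := by
    simpa [sub_eq_add_neg] using
      (hH i).add ((hasIteratedWirDOn_eichlerIntegral (hg i) N).const_mul (-1))
  have hsum := (hasIteratedWirDOn_tsum_of_summable_norm isOpen_ball hM' hpM'
    (fun i => (hG i).differentiableOn_sub_eichlerIntegral (hg i)) hp).add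
      (hasIteratedWirDOn_eichlerIntegral
        (differentiableOn_tsum_of_summable_norm hM hg isOpen_ball hgM) N)
  simp only [add_zero] at hsum
  exact hsum.congr_left isOpen_ball (eqOn_tsum_eichlerIntegral hM hGM hgM hg)

end TermwiseDifferentiation

section Psi

open Real

variable {k : ℕ} {v : ℝ}

theorem continuousOn_one_sub_rpow (s : ℝ) : ContinuousOn (fun u : ℝ => (1 - u) ^ s) (Set.Iio 1) :=
  .rpow_const (by fun_prop) fun _ hu => .inl (sub_pos.2 hu).ne'

theorem continuousOn_psi_integrand (hk : 2 ≤ k) :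
    ContinuousOn (fun u : ℝ => u ^ ((k : ℝ) - 3 / 2) * (1 - u) ^ (-(1 : ℝ) / 2)) (Set.Iio 1) := by
  have hk' : (2 : ℝ) ≤ k := by exact_mod_cast hk
  exact (continuousOn_id.rpow_const fun _ _ => .inr (by linarith)).mul
    (continuousOn_one_sub_rpow _)

theorem uIcc_zero_subset_Iio_one (hv : v < 1) : Set.uIcc 0 v ⊆ Set.Iio 1 :=
  Set.ordConnected_Iio.uIcc_subset one_pos hv

theorem rpow_mul_one_sub_rpow_eq_div_sqrt (hk : 1 ≤ k) (h₀ : 0 < v) (h₁ : v < 1) :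
    v ^ ((k : ℝ) - 3 / 2) * (1 - v) ^ (-(1 : ℝ) / 2) = v ^ (k - 1) / √(v * (1 - v)) := by
  have hexp : (k : ℝ) - 3 / 2 = ((k - 1 : ℕ) : ℝ) - 1 / 2 := by
    push_cast [hk]
    ring
  rw [hexp, rpow_sub h₀, rpow_natCast, neg_div, rpow_neg (sub_nonneg.2 h₁.le),
    ← sqrt_eq_rpow, ← sqrt_eq_rpow, sqrt_mul h₀.le]
  field_simp

theorem hasDerivAt_psi (hk : 2 ≤ k) (h₀ : 0 < v) (h₁ : v < 1) :
    HasDerivAt (psi k) (v ^ (k - 1) / (2 * √(v * (1 - v)))) v := by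
  have hcont := continuousOn_psi_integrand hk
  refine ((intervalIntegral.integral_hasDerivAt_right
    (hcont.mono (uIcc_zero_subset_Iio_one h₁)).intervalIntegrable
    (hcont.stronglyMeasurableAtFilter isOpen_Iio v h₁)
    (hcont.continuousAt (Iio_mem_nhds h₁))).const_mul (1 / 2)).congr_deriv ?_
  rw [rpow_mul_one_sub_rpow_eq_div_sqrt (by lia) h₀ h₁]
  field_simp

theorem integral_one_sub_rpow_neg_half (v : ℝ) :
    ∫ u in (0 : ℝ)..v, (1 - u) ^ (-(1 : ℝ) / 2) = 2 * (1 - √(1 - v)) := by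
  rw [intervalIntegral.integral_comp_sub_left fun u : ℝ => u ^ (-(1 : ℝ) / 2),
    integral_rpow (.inl (by norm_num)), sqrt_eq_rpow]
  norm_num
  ring

theorem abs_psi_le (hk : 2 ≤ k) (h₀ : 0 ≤ v) (h₁ : v < 1) : |psi k v| ≤ √v ^ (2 * k - 1) := by
  have hk' : (2 : ℝ) ≤ k := by exact_mod_cast hk
  have hsub := uIcc_zero_subset_Iio_one h₁
  have hpow_nonneg {u : ℝ} (hu : u ∈ Set.Icc 0 v) : 0 ≤ (1 - u) ^ (-(1 : ℝ) / 2) :=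
    rpow_nonneg (by linarith [hu.2]) _
  have hnonneg : 0 ≤ psi k v := mul_nonneg (by norm_num) <|
    intervalIntegral.integral_nonneg h₀ fun u hu => mul_nonneg (rpow_nonneg hu.1 _) (hpow_nonneg hu)
  have hsqrt : 1 - √(1 - v) ≤ v := by
    have : 1 - v ≤ √(1 - v) := le_sqrt_of_sq_le (by nlinarith)
    linarith
  rw [abs_of_nonneg hnonneg]
  calc psi k v ≤ 1 / 2 * ∫ u in (0 : ℝ)..v, v ^ ((k : ℝ) - 3 / 2) * (1 - u) ^ (-(1 : ℝ) / 2) := by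
        refine mul_le_mul_of_nonneg_left (intervalIntegral.integral_mono_on h₀
          ((continuousOn_psi_integrand hk).mono hsub).intervalIntegrable
          (((continuousOn_one_sub_rpow _).mono hsub).intervalIntegrable.const_mul _)
          fun u hu => ?_) (by norm_num)
        exact mul_le_mul_of_nonneg_right (rpow_le_rpow hu.1 hu.2 (by linarith)) (hpow_nonneg hu)
    _ = v ^ ((k : ℝ) - 3 / 2) * (1 - √(1 - v)) := by
        rw [intervalIntegral.integral_const_mul, integral_one_sub_rpow_neg_half]
        ring
    _ ≤ v ^ ((k : ℝ) - 3 / 2) * v := by gcongr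
    _ = √v ^ (2 * k - 1) := by
        rw [← rpow_add_one' h₀ (by linarith), sqrt_eq_rpow, ← rpow_mul_natCast h₀]
        congr 1
        push_cast [show 1 ≤ 2 * k by lia]
        ring

end Psi

section DivisorBound

theorem succ_pow_three_le_mul_two_pow (e : ℕ) : (e + 1) ^ 3 ≤ 8 * 2 ^ e := by
  rcases lt_or_ge e 3 with h | h
  · interval_cases e <;> norm_num
  · induction e, h using Nat.le_induction with
    | base => norm_num
    | succ n hn ih =>
      have : (n + 2) ^ 3 ≤ 2 * (n + 1) ^ 3 := by nlinarith [mul_le_mul hn hn (by lia) (by lia)]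
      rw [pow_succ 2]
      lia

theorem succ_pow_three_le_eight_pow (e : ℕ) : (e + 1) ^ 3 ≤ 8 ^ e :=
  (Nat.pow_le_pow_left Nat.lt_two_pow_self 3).trans_eq (by rw [← pow_mul, mul_comm, pow_mul]; rfl)

theorem card_divisors_pow_three_le {n : ℕ} (hn : n ≠ 0) : n.divisors.card ^ 3 ≤ 8 ^ 8 * n := by
  have hfactor (p : ℕ) (hp : p ∈ n.primeFactors) : (n.factorization p + 1) ^ 3 ≤
      (if p < 8 then 8 else 1) * p ^ n.factorization p := by
    split_ifs with h
    · exact (succ_pow_three_le_mul_two_pow _).trans (Nat.mul_le_mul_left _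
        (Nat.pow_le_pow_left (Nat.prime_of_mem_primeFactors hp).two_le _))
    · rw [one_mul]
      exact (succ_pow_three_le_eight_pow _).trans (Nat.pow_le_pow_left (not_lt.1 h) _)
  have hsmall : (n.primeFactors.filter (· < 8)).card ≤ 8 :=
    (Finset.card_le_card fun p => by simp).trans_eq (Finset.card_range 8)
  rw [Nat.card_divisors hn, ← Finset.prod_pow]
  refine (Finset.prod_le_prod' hfactor).trans ?_
  rw [Finset.prod_mul_distrib, ← Finset.prod_filter, Finset.prod_const,
    show ∏ p ∈ n.primeFactors, p ^ n.factorization p = n from Nat.prod_factorization_pow_eq_self hn]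
  exact Nat.mul_le_mul_right n (Nat.pow_le_pow_right (by norm_num) hsmall)

theorem finite_setOf_dvd_and_ncard_le {n : ℤ} (hn : n ≠ 0) :
    {a : ℤ | a ∣ n}.Finite ∧ {a : ℤ | a ∣ n}.ncard ≤ 2 * n.natAbs.divisors.card := by
  classical
  set s : Finset ℤ := n.natAbs.divisors.image (fun d : ℕ => (d : ℤ)) ∪
    n.natAbs.divisors.image fun d : ℕ => -(d : ℤ)
  have hsub : {a : ℤ | a ∣ n} ⊆ s := fun a ha => by
    have : a.natAbs ∈ n.natAbs.divisors :=
      Nat.mem_divisors.2 ⟨Int.natAbs_dvd_natAbs.2 ha, Int.natAbs_ne_zero.2 hn⟩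
    simp only [s, Finset.coe_union, Finset.coe_image, Set.mem_union, Set.mem_image]
    exact (Int.natAbs_eq a).imp (fun h => ⟨_, this, h.symm⟩) fun h => ⟨_, this, h.symm⟩
  refine ⟨s.finite_toSet.subset hsub, (Set.ncard_le_ncard hsub s.finite_toSet).trans ?_⟩
  rw [Set.ncard_coe_finset, two_mul]
  exact (Finset.card_union_le _ _).trans
    (add_le_add Finset.card_image_le Finset.card_image_le)

theorem summable_comp_of_ncard_fiber_le {α β : Type*} {g : α → β} {f c : β → ℝ}
    (hf : ∀ b, 0 ≤ f b) (hfin : ∀ b, (g ⁻¹' {b}).Finite)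
    (hc : ∀ b, ((g ⁻¹' {b}).ncard : ℝ) ≤ c b) (hs : Summable fun b => c b * f b) :
    Summable (f ∘ g) := by
  rw [← (Equiv.sigmaFiberEquiv g).summable_iff,
    summable_sigma_of_nonneg (f := (f ∘ g) ∘ Equiv.sigmaFiberEquiv g) fun _ => hf _]
  have hfiber (b : β) (a : {a // g a = b}) :
      ((f ∘ g) ∘ Equiv.sigmaFiberEquiv g) ⟨b, a⟩ = f b := congr_arg f a.2
  refine ⟨fun b => ?_, .of_nonneg_of_le (fun b => tsum_nonneg fun _ => hf _) (fun b => ?_) hs⟩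
  · have : Finite {a // g a = b} := hfin b
    exact .of_finite
  · simp only [hfiber, tsum_const, nsmul_eq_mul]
    exact mul_le_mul_of_nonneg_right (hc b) (hf b)

end DivisorBound

section QuadraticForm

open Complex Filter
open scoped ComplexConjugate Topology

variable {D : ℤ} {q : ℤ × ℤ × ℤ} {z : ℂ}

theorem Qval_eq (q : ℤ × ℤ × ℤ) (z : ℂ) :
    Qval q z = Qell q z + I * z.im * (2 * q.1 * z + q.2.1) := by
  apply Complex.ext <;> simp [Qval, Qell, normSq_apply, pow_two] <;> ring

theorem normSq_Qval (hq : q ∈ QD D) (z : ℂ) :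
    normSq (Qval q z) = Qell q z ^ 2 + D * z.im ^ 2 := by
  have hdisc : (q.2.1 : ℝ) ^ 2 - 4 * q.1 * q.2.2 = D := by exact_mod_cast hq
  rw [← hdisc]
  simp only [Qval, Qell, normSq_apply, pow_two, add_re, add_im, mul_re, mul_im, intCast_re,
    intCast_im]
  ring

theorem Qval_ne_zero (hD : 0 < D) (hq : q ∈ QD D) (hz : 0 < z.im) : Qval q z ≠ 0 := by
  rw [← normSq_pos, normSq_Qval hq]
  positivity

theorem hasDerivAt_Qval (q : ℤ × ℤ × ℤ) (z : ℂ) :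
    HasDerivAt (Qval q) (2 * q.1 * z + q.2.1) z := by
  refine ((((hasDerivAt_id' z).pow 2).const_mul (q.1 : ℂ)).add
    ((hasDerivAt_id' z).const_mul (q.2.1 : ℂ))).add_const (q.2.2 : ℂ) |>.congr_deriv ?_
  simp
  ring

theorem discrim_Qval (hq : q ∈ QD D) (z : ℂ) :
    (2 * q.1 * z + q.2.1 : ℂ) ^ 2 - 2 * (2 * q.1) * Qval q z = D := by
  have hdisc : (q.2.1 : ℂ) ^ 2 - 4 * q.1 * q.2.2 = D := by exact_mod_cast hq
  rw [← hdisc, Qval]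
  ring

theorem hasWirtingerDerivAt_Qell (q : ℤ × ℤ × ℤ) (z : ℂ) :
    HasWirtingerDerivAt (fun z => (Qell q z : ℂ)) (q.1 * conj z + q.2.1 / 2)
      (q.1 * z + q.2.1 / 2) z := by
  have hid := hasWirtingerDerivAt_of_hasDerivAt (hasDerivAt_id' z)
  refine (((((hid.mul hid.star).const_mul q.1).add ((hid.add hid.star).const_mul (q.2.1 / 2))).add
    (.const q.2.2 z)).congr_deriv (by simp) (by simp)).congr_of_eqOn isOpen_univ
      (Set.mem_univ z) fun w _ => ?_
  simp only [Qell, mul_conj, add_conj]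
  push_cast
  ring

theorem continuous_Qell (q : ℤ × ℤ × ℤ) : Continuous (Qell q) := by
  unfold Qell
  fun_prop

theorem eventually_sign_Qell_eq (hs : Qell q z ≠ 0) :
    ∀ᶠ w in 𝓝 z, (Qell q w).sign = (Qell q z).sign := by
  have hcont := (continuous_Qell q).continuousAt (x := z)
  rcases hs.lt_or_gt with h | h
  · filter_upwards [hcont.eventually_lt_const h] with w hw
    rw [Real.sign_of_neg h, Real.sign_of_neg hw]
  · filter_upwards [hcont.eventually_const_lt h] with w hw
    rw [Real.sign_of_pos h, Real.sign_of_pos hw]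

/-- The complex number `w = a|z|² + bx + c + i√D y`; it has the same modulus as `Q(z, 1)`, and its
real part carries the sign that occurs in `F`. -/
noncomputable def formVector (D : ℤ) (q : ℤ × ℤ × ℤ) (z : ℂ) : ℂ :=
  Qell q z + √D * z.im * I

/-- The squared phase `w / conj w` of `w = formVector D q z`. It is an eigenfunction of `Q ∂/∂z`,
and `psiArg` is a Laurent polynomial in it. -/
noncomputable def formPhase (D : ℤ) (q : ℤ × ℤ × ℤ) (z : ℂ) : ℂ :=
  formVector D q z / conj (formVector D q z)

/-- The argument `D y² / |Q(z, 1)|²` of `psi` in the summand of `F` attached to `Q`. -/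
noncomputable def psiArg (D : ℤ) (q : ℤ × ℤ × ℤ) (z : ℂ) : ℝ :=
  D * z.im ^ 2 / normSq (Qval q z)

theorem ofReal_sqrt_sq (hD : 0 < D) : (√D : ℂ) ^ 2 = D := by
  rw [← ofReal_pow, Real.sq_sqrt (by exact_mod_cast hD.le), ofReal_intCast]

theorem conj_formVector (D : ℤ) (q : ℤ × ℤ × ℤ) (z : ℂ) :
    conj (formVector D q z) = Qell q z - √D * z.im * I := by
  simp [formVector, sub_eq_add_neg]

theorem normSq_formVector (hD : 0 < D) (hq : q ∈ QD D) (z : ℂ) :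
    normSq (formVector D q z) = normSq (Qval q z) := by
  rw [normSq_Qval hq, formVector, ← ofReal_mul, normSq_add_mul_I, mul_pow,
    Real.sq_sqrt (by exact_mod_cast hD.le)]

theorem formVector_ne_zero (hD : 0 < D) (hq : q ∈ QD D) (hz : 0 < z.im) :
    formVector D q z ≠ 0 := by
  rw [← normSq_pos, normSq_formVector hD hq, normSq_pos]
  exact Qval_ne_zero hD hq hz

theorem formPhase_ne_zero (hD : 0 < D) (hq : q ∈ QD D) (hz : 0 < z.im) : formPhase D q z ≠ 0 :=
  have hw := formVector_ne_zero hD hq hz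
  div_ne_zero hw ((map_ne_zero _).2 hw)

theorem conj_Qval_eq (q : ℤ × ℤ × ℤ) (z : ℂ) :
    conj (Qval q z) = Qell q z - I * z.im * (2 * q.1 * conj z + q.2.1) := by
  simp only [Qval_eq, map_add, map_mul, map_intCast, map_ofNat, conj_I, conj_ofReal]
  ring

theorem hasWirtingerDerivAt_formVector (D : ℤ) (q : ℤ × ℤ × ℤ) (z : ℂ) :
    HasWirtingerDerivAt (formVector D q) (q.1 * conj z + q.2.1 / 2 + √D / 2)
      (q.1 * z + q.2.1 / 2 - √D / 2) z := by
  refine (((hasWirtingerDerivAt_Qell q z).add ((HasWirtingerDerivAt.im z).const_mul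
    (√D * I))).congr_deriv ?_ ?_).congr_of_eqOn isOpen_univ (Set.mem_univ z) fun w _ => ?_
  · field_simp
  · field_simp
    ring
  · rw [formVector]
    ring

theorem hasWirtingerDerivAt_formPhase (hD : 0 < D) (hq : q ∈ QD D) (hz : 0 < z.im) :
    HasWirtingerDerivAt (formPhase D q) (√D * formPhase D q z / Qval q z)
      (-(√D * formPhase D q z / conj (Qval q z))) z := by
  have hQ := Qval_ne_zero hD hq hz
  have hQ' : conj (Qval q z) ≠ 0 := (map_ne_zero _).2 hQ
  have hw' : conj (formVector D q z) ≠ 0 := (map_ne_zero _).2 (formVector_ne_zero hD hq hz)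
  have hnorm : Qval q z * conj (Qval q z) = formVector D q z * conj (formVector D q z) := by
    rw [mul_conj, mul_conj, normSq_formVector hD hq]
  have hw := hasWirtingerDerivAt_formVector D q z
  have hw_conj : HasWirtingerDerivAt (fun z => conj (formVector D q z))
      (q.1 * conj z + q.2.1 / 2 - √D / 2) (q.1 * z + q.2.1 / 2 + √D / 2) z :=
    hw.star.congr_deriv (by simp [conj_ofNat]) (by simp [conj_ofNat])
  refine (hw.div hw_conj hw').congr_deriv ?_ ?_
  · calc _ = √D * conj (Qval q z) / conj (formVector D q z) ^ 2 := by
          rw [conj_Qval_eq, conj_formVector, formVector]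
          ring
      _ = √D * formPhase D q z / Qval q z := by
          rw [formPhase]
          field_simp
          linear_combination √D * hnorm
  · calc _ = -(√D * Qval q z / conj (formVector D q z) ^ 2) := by
          rw [Qval_eq, conj_formVector, formVector]
          ring
      _ = -(√D * formPhase D q z / conj (Qval q z)) := by
          rw [formPhase]
          field_simp
          linear_combination -√D * hnorm

theorem ofReal_psiArg_eq (hD : 0 < D) (hq : q ∈ QD D) (hz : 0 < z.im) :
    (psiArg D q z : ℂ) = (2 - formPhase D q z - (formPhase D q z)⁻¹) / 4 := by
  have hw := formVector_ne_zero hD hq hz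
  have hw' : conj (formVector D q z) ≠ 0 := (map_ne_zero _).2 hw
  have hdiff : (formVector D q z - conj (formVector D q z)) ^ 2 = -4 * D * (z.im : ℂ) ^ 2 := by
    rw [conj_formVector, formVector, ← ofReal_sqrt_sq hD]
    linear_combination (4 * √D ^ 2 * (z.im : ℂ) ^ 2) * I_sq
  rw [psiArg, formPhase, ofReal_div, ← normSq_formVector hD hq, ← mul_conj]
  push_cast
  field_simp
  linear_combination hdiff

theorem formPhase_sub_inv (hD : 0 < D) (hq : q ∈ QD D) (hz : 0 < z.im) :
    formPhase D q z - (formPhase D q z)⁻¹ =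
      4 * I * √D * z.im * Qell q z / normSq (Qval q z) := by
  have hw := formVector_ne_zero hD hq hz
  have hw' : conj (formVector D q z) ≠ 0 := (map_ne_zero _).2 hw
  rw [formPhase, ← normSq_formVector hD hq, ← mul_conj]
  field_simp
  rw [conj_formVector, formVector]
  ring

theorem hasWirtingerDerivAt_psiArg (hD : 0 < D) (hq : q ∈ QD D) (hz : 0 < z.im) :
    HasWirtingerDerivAt (fun z => (psiArg D q z : ℂ))
      (-(I * D * z.im * Qell q z / (normSq (Qval q z) * Qval q z)))
      (I * D * z.im * Qell q z / (normSq (Qval q z) * conj (Qval q z))) z := by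
  have hE := hasWirtingerDerivAt_formPhase hD hq hz
  have hE₀ := formPhase_ne_zero hD hq hz
  have hφ : HasDerivAt (fun e : ℂ => (2 - e - e⁻¹) / 4)
      ((-1 + (formPhase D q z ^ 2)⁻¹) / 4) (formPhase D q z) :=
    ((((hasDerivAt_id' _).const_sub 2).sub (hasDerivAt_inv hE₀)).div_const 4).congr_deriv (by ring)
  have hscale (c : ℂ) : (-1 + (formPhase D q z ^ 2)⁻¹) / 4 * (√D * formPhase D q z / c) =
      -(I * D * z.im * Qell q z / (normSq (Qval q z) * c)) := by
    calc _ = -(√D / 4 / c * (formPhase D q z - (formPhase D q z)⁻¹)) := by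
          field_simp
          ring
      _ = _ := by
          rw [formPhase_sub_inv hD hq hz, ← ofReal_sqrt_sq hD]
          ring
  refine ((hE.comp hφ).congr_deriv (hscale _) ?_).congr_of_eqOn
    (isOpen_lt continuous_const continuous_im) hz fun w hw => ofReal_psiArg_eq hD hq hw
  rw [mul_neg, hscale, neg_neg]

theorem psiArg_pos (hD : 0 < D) (hq : q ∈ QD D) (hz : 0 < z.im) : 0 < psiArg D q z :=
  have := normSq_pos.2 (Qval_ne_zero hD hq hz)
  by unfold psiArg; positivity

theorem one_sub_psiArg (hD : 0 < D) (hq : q ∈ QD D) (hz : 0 < z.im) :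
    1 - psiArg D q z = Qell q z ^ 2 / normSq (Qval q z) := by
  have := (normSq_pos.2 (Qval_ne_zero hD hq hz)).ne'
  rw [psiArg, one_sub_div this, normSq_Qval hq, add_sub_cancel_right]

theorem psiArg_lt_one (hD : 0 < D) (hq : q ∈ QD D) (hz : 0 < z.im) (hs : Qell q z ≠ 0) :
    psiArg D q z < 1 := by
  have := normSq_pos.2 (Qval_ne_zero hD hq hz)
  rw [← sub_pos, one_sub_psiArg hD hq hz]
  positivity

theorem sqrt_psiArg (D : ℤ) (q : ℤ × ℤ × ℤ) (hz : 0 < z.im) :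
    √(psiArg D q z) = √D * z.im / ‖Qval q z‖ := by
  rw [psiArg, normSq_eq_norm_sq, Real.sqrt_div' _ (sq_nonneg _), Real.sqrt_sq (norm_nonneg _),
    Real.sqrt_mul' _ (sq_nonneg _), Real.sqrt_sq hz.le]

theorem sqrt_psiArg_mul_one_sub (hD : 0 < D) (hq : q ∈ QD D) (hz : 0 < z.im) :
    √(psiArg D q z * (1 - psiArg D q z)) = √D * z.im * |Qell q z| / normSq (Qval q z) := by
  rw [Real.sqrt_mul (psiArg_pos hD hq hz).le, sqrt_psiArg D q hz, one_sub_psiArg hD hq hz,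
    normSq_eq_norm_sq, Real.sqrt_div (sq_nonneg _), Real.sqrt_sq (norm_nonneg _),
    Real.sqrt_sq_eq_abs, div_mul_div_comm, ← sq]

end QuadraticForm

section Convergence

open Complex Filter
open scoped Topology

variable {D : ℤ} {q : ℤ × ℤ × ℤ} {z : ℂ}

theorem finite_QD_fiber_and_ncard_le (hD : ¬∃ m : ℤ, m ^ 2 = D) (b : ℤ) :
    ((fun q : QD D => q.1.2.1) ⁻¹' {b}).Finite ∧
      ((fun q : QD D => q.1.2.1) ⁻¹' {b}).ncard ≤ 2 * (b ^ 2 - D).natAbs.divisors.card := by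
  obtain ⟨hfin, hcard⟩ := finite_setOf_dvd_and_ncard_le (n := b ^ 2 - D) fun h => hD ⟨b, by lia⟩
  have hmaps : Set.MapsTo (fun q : QD D => q.1.1) ((fun q : QD D => q.1.2.1) ⁻¹' {b})
      {a | a ∣ b ^ 2 - D} := by
    rintro ⟨⟨a, b, c⟩, hq : b ^ 2 - 4 * a * c = D⟩ rfl
    exact ⟨4 * c, by lia⟩
  have hinj : Set.InjOn (fun q : QD D => q.1.1) ((fun q : QD D => q.1.2.1) ⁻¹' {b}) := by
    rintro ⟨⟨a, b, c⟩, hq : b ^ 2 - 4 * a * c = D⟩ rfl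
      ⟨⟨a', b', c'⟩, hq' : b' ^ 2 - 4 * a' * c' = D⟩ (rfl : b' = b) (rfl : a = a')
    have ha : a ≠ 0 := by
      rintro rfl
      exact hD ⟨b', by simpa using hq⟩
    obtain rfl : c = c' := mul_left_cancel₀ (mul_ne_zero four_ne_zero ha) (by linarith)
    rfl
  exact ⟨.of_finite_image (hfin.subset hmaps.image_subset) hinj,
    (Set.ncard_le_ncard_of_injOn _ hmaps hinj hfin).trans hcard⟩

theorem exists_card_divisors_sq_sub_le (hD : ¬∃ m : ℤ, m ^ 2 = D) : ∃ C : ℝ, ∀ b : ℤ,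
    ((b ^ 2 - D).natAbs.divisors.card : ℝ) ≤ C * (1 + |(b : ℝ)|) ^ (2 / 3 : ℝ) := by
  refine ⟨(8 ^ 8 * (1 + |(D : ℝ)|)) ^ (1 / 3 : ℝ), fun b => ?_⟩
  set n := (b ^ 2 - D).natAbs
  have hb : 0 ≤ 1 + |(b : ℝ)| := by positivity
  have hn : (n : ℝ) ≤ (1 + |(D : ℝ)|) * (1 + |(b : ℝ)|) ^ 2 := by
    have : (n : ℝ) ≤ |(b : ℝ)| ^ 2 + |(D : ℝ)| := by
      rw [Nat.cast_natAbs, ← abs_pow]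
      exact_mod_cast abs_sub (b ^ (2 : ℕ)) D
    nlinarith [abs_nonneg (b : ℝ), abs_nonneg (D : ℝ),
      mul_nonneg (abs_nonneg (b : ℝ)) (abs_nonneg (D : ℝ)),
      mul_nonneg (sq_nonneg |(b : ℝ)|) (abs_nonneg (D : ℝ))]
  have hcube : (n.divisors.card : ℝ) ^ 3 ≤ 8 ^ 8 * (1 + |(D : ℝ)|) * (1 + |(b : ℝ)|) ^ 2 := by
    have : (n.divisors.card : ℝ) ^ 3 ≤ 8 ^ 8 * n := by
      exact_mod_cast card_divisors_pow_three_le (Int.natAbs_ne_zero.2 fun h => hD ⟨b, by lia⟩)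
    linarith
  calc (n.divisors.card : ℝ) = ((n.divisors.card : ℝ) ^ 3) ^ (1 / 3 : ℝ) := by
        rw [one_div]
        exact (Real.pow_rpow_inv_natCast (by positivity) (by norm_num)).symm
    _ ≤ (8 ^ 8 * (1 + |(D : ℝ)|) * (1 + |(b : ℝ)|) ^ 2) ^ (1 / 3 : ℝ) := by gcongr
    _ = _ := by
        rw [Real.mul_rpow (by positivity) (by positivity), ← Real.rpow_natCast_mul hb]
        norm_num

theorem summable_one_add_abs_rpow {s : ℝ} (hs : s < -1) :
    Summable fun b : ℤ => (1 + |(b : ℝ)|) ^ s := by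
  have hnat : Summable fun n : ℕ => (1 + (n : ℝ)) ^ s := by
    simpa [add_comm] using (summable_nat_add_iff 1).2 (Real.summable_nat_rpow.2 hs)
  exact .of_nat_of_neg (by simpa using hnat) (by simpa using hnat)

theorem summable_QD_one_add_abs_rpow (hD : ¬∃ m : ℤ, m ^ 2 = D) :
    Summable fun q : QD D => (1 + |(q.1.2.1 : ℝ)|) ^ (-2 : ℝ) := by
  obtain ⟨C, hC⟩ := exists_card_divisors_sq_sub_le hD
  refine summable_comp_of_ncard_fiber_le (f := fun b : ℤ => (1 + |(b : ℝ)|) ^ (-2 : ℝ))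
    (c := fun b => 2 * (C * (1 + |(b : ℝ)|) ^ (2 / 3 : ℝ))) (fun b => by positivity)
    (fun b => (finite_QD_fiber_and_ncard_le hD b).1) (fun b => ?_) ?_
  · have : (((fun q : QD D => q.1.2.1) ⁻¹' {b}).ncard : ℝ) ≤
        2 * (b ^ 2 - D).natAbs.divisors.card := by
      exact_mod_cast (finite_QD_fiber_and_ncard_le hD b).2
    linarith [hC b]
  · refine ((summable_one_add_abs_rpow (s := -4 / 3) (by norm_num)).mul_left (2 * C)).congr
      fun b => ?_
    rw [← mul_assoc, mul_assoc (2 * C), ← Real.rpow_add (by positivity)]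
    norm_num

theorem finite_QD_abs_le (hD : ¬∃ m : ℤ, m ^ 2 = D) (B : ℝ) :
    {q : QD D | |(q.1.2.1 : ℝ)| ≤ B}.Finite := by
  refine .subset ((Set.finite_Icc (-⌊B⌋) ⌊B⌋).preimage' fun b _ =>
    (finite_QD_fiber_and_ncard_le hD b).1) fun q hq => ?_
  rw [Set.mem_preimage, Set.mem_Icc, ← abs_le, Int.le_floor]
  exact_mod_cast hq

theorem im_sq_mul_one_add_abs_le (hD : 0 < D) (hq : q ∈ QD D) (hz : 0 < z.im) :
    z.im ^ 2 * (1 + |(q.2.1 : ℝ)|) ≤ (3 * z.im + 2 * ‖z‖) * ‖Qval q z‖ := by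
  have hD' : (1 : ℝ) ≤ D := by exact_mod_cast hD
  have hnorm : ‖Qval q z‖ ^ 2 = Qell q z ^ 2 + D * z.im ^ 2 := by
    rw [← normSq_eq_norm_sq, normSq_Qval hq]
  set Q' : ℂ := 2 * q.1 * z + q.2.1
  have hs : |Qell q z| ≤ ‖Qval q z‖ :=
    abs_le_of_sq_le_sq (by rw [hnorm]; nlinarith) (norm_nonneg _)
  have hy : z.im ≤ ‖Qval q z‖ :=
    le_of_sq_le_sq (by rw [hnorm]; nlinarith [sq_nonneg (Qell q z)]) (norm_nonneg _)
  have hQ' : z.im * ‖Q'‖ ≤ 2 * ‖Qval q z‖ := by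
    calc z.im * ‖Q'‖ = ‖Qval q z - Qell q z‖ := by
          rw [Qval_eq, add_sub_cancel_left]
          simp [Q', abs_of_pos hz]
      _ ≤ ‖Qval q z‖ + |Qell q z| := by simpa using norm_sub_le (Qval q z) (Qell q z)
      _ ≤ 2 * ‖Qval q z‖ := by linarith
  have ha : 2 * |(q.1 : ℝ)| * z.im ≤ ‖Q'‖ := by
    simpa [Q', abs_mul, abs_of_pos hz] using abs_im_le_norm Q'
  have hb : |(q.2.1 : ℝ)| ≤ ‖Q'‖ + 2 * |(q.1 : ℝ)| * ‖z‖ := by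
    simpa [Q'] using norm_sub_le Q' (2 * q.1 * z)
  have hyb : z.im * |(q.2.1 : ℝ)| * z.im ≤ 2 * (z.im + ‖z‖) * ‖Qval q z‖ := by
    nlinarith [norm_nonneg z, mul_le_mul_of_nonneg_right ha (norm_nonneg z)]
  nlinarith

theorem exists_pos_eventually_mul_le_norm_Qval (hD : 0 < D) (hz : 0 < z.im) : ∃ c > 0,
    ∀ᶠ w in 𝓝 z, ∀ q ∈ QD D, c * (1 + |(q.2.1 : ℝ)|) ≤ ‖Qval q w‖ := by
  set φ : ℂ → ℝ := fun w => w.im ^ 2 / (3 * w.im + 2 * ‖w‖)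
  have hden {w : ℂ} (hw : 0 < w.im) : 0 < 3 * w.im + 2 * ‖w‖ := by positivity
  have hφ : ContinuousAt φ z := by
    have := (hden hz).ne'
    fun_prop (disch := assumption)
  have hpos : 0 < φ z := div_pos (pow_pos hz 2) (hden hz)
  refine ⟨φ z / 2, half_pos hpos, ?_⟩
  filter_upwards [hφ.eventually_const_lt (half_lt_self hpos),
    continuous_im.continuousAt.eventually_const_lt hz] with w hwφ hw q hq
  calc φ z / 2 * (1 + |(q.2.1 : ℝ)|) ≤ φ w * (1 + |(q.2.1 : ℝ)|) := by gcongr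
    _ ≤ ‖Qval q w‖ := by
        rw [div_mul_eq_mul_div, div_le_iff₀ (hden hw), mul_comm ‖_‖]
        exact im_sq_mul_one_add_abs_le hD hq hw

theorem eventually_forall_Qell_ne_zero (hD : 0 < D) (hDsq : ¬∃ m : ℤ, m ^ 2 = D) (hz : 0 < z.im)
    (hzE : ∀ q ∈ QD D, Qell q z ≠ 0) : ∀ᶠ w in 𝓝 z, ∀ q ∈ QD D, Qell q w ≠ 0 := by
  obtain ⟨c, hc, hlow⟩ := exists_pos_eventually_mul_le_norm_Qval hD hz
  set B := √D * (z.im + 1) / c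
  have hfinite : ∀ᶠ w in 𝓝 z, ∀ q ∈ {q : QD D | |(q.1.2.1 : ℝ)| ≤ B}, Qell q.1 w ≠ 0 :=
    (eventually_all_finite (finite_QD_abs_le hDsq B)).2 fun q _ =>
      (continuous_Qell q.1).continuousAt.eventually_ne (hzE q q.2)
  filter_upwards [hlow, hfinite, continuous_im.continuousAt.eventually_const_lt hz,
    continuous_im.continuousAt.eventually_lt_const (lt_add_one z.im)] with w hw hwB him him' q hq h0
  refine hwB ⟨q, hq⟩ ?_ h0
  have hnorm : ‖Qval q w‖ = √D * w.im := by
    rw [norm_def, normSq_Qval hq, h0, zero_pow two_ne_zero, zero_add,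
      Real.sqrt_mul (by exact_mod_cast hD.le), Real.sqrt_sq him.le]
  rw [le_div_iff₀ hc]
  calc |(q.2.1 : ℝ)| * c ≤ c * (1 + |(q.2.1 : ℝ)|) := by linarith
    _ ≤ √D * w.im := (hw q hq).trans_eq hnorm
    _ ≤ √D * (z.im + 1) := by gcongr

theorem exists_summable_eventually_norm_inv_Qval_pow_le {k : ℕ} (hk : 2 ≤ k) (hD : 0 < D)
    (hDsq : ¬∃ m : ℤ, m ^ 2 = D) (hz : 0 < z.im) : ∃ M : QD D → ℝ, Summable M ∧
      ∀ᶠ w in 𝓝 z, ∀ q : QD D, ‖(Qval q.1 w)⁻¹‖ ^ k ≤ M q := by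
  obtain ⟨c, hc, hlow⟩ := exists_pos_eventually_mul_le_norm_Qval hD hz
  refine ⟨_, (summable_QD_one_add_abs_rpow hDsq).mul_left (c⁻¹ ^ k), hlow.mono fun w hw q => ?_⟩
  have hb : 1 ≤ 1 + |(q.1.2.1 : ℝ)| := le_add_of_nonneg_right (abs_nonneg _)
  calc ‖(Qval q.1 w)⁻¹‖ ^ k ≤ (c * (1 + |(q.1.2.1 : ℝ)|))⁻¹ ^ k := by
        rw [norm_inv]
        gcongr
        exact hw q q.2
    _ = c⁻¹ ^ k * ((1 + |(q.1.2.1 : ℝ)|) ^ k)⁻¹ := by rw [mul_inv, mul_pow, inv_pow (1 + _)]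
    _ ≤ c⁻¹ ^ k * (1 + |(q.1.2.1 : ℝ)|) ^ (-2 : ℝ) := by
        rw [Real.rpow_neg (by positivity), Real.rpow_two]
        gcongr

end Convergence

section Summand

open Complex Finset
open scoped ComplexConjugate

theorem two_sub_sub_inv_pow {E : ℂ} (hE : E ≠ 0) (m : ℕ) :
    (2 - E - E⁻¹) ^ m =
      ∑ j ∈ range (2 * m + 1), (-1) ^ (j + m) * (2 * m).choose j * E ^ (j - m : ℤ) := by
  have hfactor : 2 - E - E⁻¹ = -1 * (E - 1) ^ 2 * E⁻¹ := by
    field_simp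
    ring
  rw [hfactor, mul_pow, mul_pow, ← pow_mul, sub_pow, mul_sum, sum_mul]
  refine sum_congr rfl fun j _ => ?_
  rw [zpow_sub₀ hE, zpow_natCast, zpow_natCast, pow_add, pow_add, pow_mul, neg_one_sq]
  ring

theorem prod_mul_sq_sub_sq_eq_zero {R : Type*} [CommRing R] {m : ℕ} {n : ℤ} (a : R) (hn : n ≠ 0)
    (hnm : n.natAbs ≤ m) : ∏ l ∈ range m, ((n * a) ^ 2 - (l + 1) ^ 2 * a ^ 2) = 0 := by
  refine prod_eq_zero (i := n.natAbs - 1) (mem_range.2 (by omega)) ?_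
  have hcast : ((n.natAbs - 1 : ℕ) : R) + 1 = n.natAbs := by
    rw [← Nat.cast_add_one, Nat.sub_add_cancel (Int.natAbs_pos.2 hn)]
  have hsq : (n.natAbs : R) ^ 2 = (n : R) ^ 2 := by
    exact_mod_cast congr_arg (Int.cast (R := R)) (Int.natAbs_sq n)
  rw [hcast, hsq]
  ring

theorem prod_neg_sq_mul {R : Type*} [CommRing R] (m : ℕ) (Δ : R) :
    ∏ l ∈ range m, (-((l + 1) ^ 2 * Δ)) = (-Δ) ^ m * (m.factorial : R) ^ 2 := by
  induction m with
  | zero => simp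
  | succ m ih =>
    rw [prod_range_succ, ih, Nat.factorial_succ]
    push_cast
    ring

theorem sum_choose_mul_prod_mul_zpow {K : Type*} [Field K] (m : ℕ) (a E : K) :
    ∑ j ∈ range (2 * m + 1), (-1) ^ (j + m) * (2 * m).choose j *
      (∏ l ∈ range m, (((j - m : ℤ) * a) ^ 2 - (l + 1) ^ 2 * a ^ 2)) * E ^ (j - m : ℤ) =
      (2 * m).factorial * (-a ^ 2) ^ m := by
  rw [sum_eq_single_of_mem m (mem_range.2 (by omega))]
  · have hchoose : ((2 * m).factorial : K) = (2 * m).choose m * (m.factorial : K) ^ 2 := by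
      rw [← Nat.choose_mul_factorial_mul_factorial (n := 2 * m) (k := m) (by omega),
        show 2 * m - m = m by omega]
      push_cast
      ring
    simp only [sub_self, Int.cast_zero, zero_mul, zero_pow two_ne_zero, zero_sub, zpow_zero,
      mul_one]
    rw [prod_neg_sq_mul, ← two_mul, pow_mul, neg_one_sq, one_pow, hchoose]
    ring
  · intro j hj hjm
    rw [prod_mul_sq_sub_sq_eq_zero a (by omega) (by have := mem_range.1 hj; omega)]
    ring

variable {D : ℤ} {q : ℤ × ℤ × ℤ} {z : ℂ} {k m : ℕ}

theorem hasWirtingerDerivAt_formPhase_zpow (hD : 0 < D) (hq : q ∈ QD D) (hz : 0 < z.im) (n : ℤ) :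
    ∃ B, HasWirtingerDerivAt (fun z => formPhase D q z ^ n)
      ((n * √D) * formPhase D q z ^ n / Qval q z) B z := by
  have hE := formPhase_ne_zero hD hq hz
  refine ⟨_, ((hasWirtingerDerivAt_formPhase hD hq hz).zpow hE n).congr_deriv ?_ rfl⟩
  rw [zpow_sub_one₀ hE]
  field_simp

theorem psiArg_pow_eq_sum (hD : 0 < D) (hq : q ∈ QD D) (hz : 0 < z.im) (m : ℕ) :
    (psiArg D q z : ℂ) ^ m = ∑ j ∈ range (2 * m + 1),
      (-1) ^ (j + m) * (2 * m).choose j / 4 ^ m * formPhase D q z ^ (j - m : ℤ) := by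
  rw [ofReal_psiArg_eq hD hq hz, div_pow, two_sub_sub_inv_pow (formPhase_ne_zero hD hq hz), sum_div]
  exact sum_congr rfl fun j _ => by ring

theorem Fsummand_eq (k : ℕ) (D : ℤ) (z : ℂ) (q : ℤ × ℤ × ℤ) :
    Fsummand k D z q =
      Qval q z ^ (k - 1) * (((Qell q z).sign * psi k (psiArg D q z) : ℝ) : ℂ) := by
  rw [Fsummand, psiArg]
  push_cast
  ring

theorem norm_Fsummand_le (hk : 2 ≤ k) (hD : 0 < D) (hq : q ∈ QD D) (hz : 0 < z.im)
    (hs : Qell q z ≠ 0) :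
    ‖Fsummand k D z q‖ ≤ (√D * z.im) ^ (2 * k - 1) * ‖(Qval q z)⁻¹‖ ^ k := by
  have hQ : ‖Qval q z‖ ≠ 0 := norm_ne_zero_iff.2 (Qval_ne_zero hD hq hz)
  have hsign : |(Qell q z).sign| = 1 := by
    rcases hs.lt_or_gt with h | h
    · rw [Real.sign_of_neg h, abs_neg, abs_one]
    · rw [Real.sign_of_pos h, abs_one]
  obtain ⟨m, rfl⟩ : ∃ m, k = m + 1 := ⟨k - 1, by omega⟩
  rw [Fsummand_eq, norm_mul, norm_pow, norm_real, Real.norm_eq_abs, abs_mul, hsign, one_mul]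
  calc ‖Qval q z‖ ^ m * |psi (m + 1) (psiArg D q z)|
      ≤ ‖Qval q z‖ ^ m * (√D * z.im / ‖Qval q z‖) ^ (2 * m + 1) := by
        rw [← sqrt_psiArg D q hz]
        gcongr
        exact abs_psi_le hk (psiArg_pos hD hq hz).le (psiArg_lt_one hD hq hz hs)
    _ = (√D * z.im) ^ (2 * m + 1) * ‖(Qval q z)⁻¹‖ ^ (m + 1) := by
        rw [norm_inv, inv_pow, div_pow]
        field_simp
        ring

theorem hasDerivAt_sign_mul_psi (hk : 2 ≤ k) (hD : 0 < D) (hq : q ∈ QD D) (hz : 0 < z.im)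
    (hs : Qell q z ≠ 0) :
    HasDerivAt (fun v => (Qell q z).sign * psi k v)
      (psiArg D q z ^ (k - 1) * normSq (Qval q z) / (2 * √D * z.im * Qell q z))
      (psiArg D q z) := by
  refine ((hasDerivAt_psi hk (psiArg_pos hD hq hz) (psiArg_lt_one hD hq hz hs)).const_mul
    (Qell q z).sign).congr_deriv ?_
  rw [sqrt_psiArg_mul_one_sub hD hq hz]
  rcases hs.lt_or_gt with h | h
  · rw [Real.sign_of_neg h, abs_of_neg h]
    field_simp
  · rw [Real.sign_of_pos h, abs_of_pos h]
    field_simp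

theorem hasWirtingerDerivAt_sign_mul_psi (hk : 2 ≤ k) (hD : 0 < D) (hq : q ∈ QD D)
    (hz : 0 < z.im) (hs : Qell q z ≠ 0) :
    HasWirtingerDerivAt (fun z => (((Qell q z).sign * psi k (psiArg D q z) : ℝ) : ℂ))
      (-(I / 2 * √D * psiArg D q z ^ (k - 1)) / Qval q z)
      (I / 2 * √D * psiArg D q z ^ (k - 1) / conj (Qval q z)) z := by
  have hQ := Qval_ne_zero hD hq hz
  have hn : (normSq (Qval q z) : ℂ) ≠ 0 := ofReal_ne_zero.2 (normSq_pos.2 hQ).ne'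
  have hQ' : conj (Qval q z) ≠ 0 := (map_ne_zero _).2 hQ
  have hs' : (Qell q z : ℂ) ≠ 0 := ofReal_ne_zero.2 hs
  have hy : (z.im : ℂ) ≠ 0 := ofReal_ne_zero.2 hz.ne'
  have hsqrt : (√D : ℂ) ≠ 0 := ofReal_ne_zero.2 (Real.sqrt_pos.2 (Int.cast_pos.2 hD)).ne'
  obtain ⟨U, hsign, hU, hzU⟩ := eventually_nhds_iff.1 (eventually_sign_Qell_eq hs)
  refine ((HasWirtingerDerivAt.comp_ofReal (hasDerivAt_sign_mul_psi hk hD hq hz hs)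
    (hasWirtingerDerivAt_psiArg hD hq hz)).congr_deriv ?_ ?_).congr_of_eqOn hU hzU
      fun w hw => by rw [hsign w hw]
  all_goals
    rw [← ofReal_sqrt_sq hD]
    push_cast
    field_simp

theorem hasWirtingerDerivAt_sign_mul_psi_sum (hm : 1 ≤ m) (hD : 0 < D) (hq : q ∈ QD D)
    (hz : 0 < z.im) (hs : Qell q z ≠ 0) : ∃ B, HasWirtingerDerivAt
      (fun z => (((Qell q z).sign * psi (m + 1) (psiArg D q z) : ℝ) : ℂ))
      ((∑ j ∈ range (2 * m + 1), (-(I / 2 * √D) / 4 ^ m * ((-1) ^ (j + m) * (2 * m).choose j)) *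
        formPhase D q z ^ (j - m : ℤ)) / Qval q z) B z := by
  refine ⟨_, (hasWirtingerDerivAt_sign_mul_psi (by omega) hD hq hz hs).congr_deriv ?_ rfl⟩
  rw [Nat.add_sub_cancel, psiArg_pow_eq_sum hD hq hz, ← neg_mul, mul_sum]
  exact congr_arg (· / _) (sum_congr rfl fun j _ => by ring)

/-- The holomorphic function `g` for which `∂Fsummand/∂z̄ = y^(2k-2) conj g`, where `k = m + 1`. -/
noncomputable def summandShadow (m : ℕ) (D : ℤ) (q : ℤ × ℤ × ℤ) (z : ℂ) : ℂ :=
  -(I / 2 * √D ^ (2 * m + 1)) * Qval q z ^ (-(m + 1) : ℤ)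

theorem norm_summandShadow (m : ℕ) (D : ℤ) (q : ℤ × ℤ × ℤ) (z : ℂ) :
    ‖summandShadow m D q z‖ = √D ^ (2 * m + 1) / 2 * ‖(Qval q z)⁻¹‖ ^ (m + 1) := by
  rw [summandShadow, ← Nat.cast_succ, zpow_neg, zpow_natCast, ← inv_pow]
  simp only [norm_mul, norm_neg, norm_div, norm_pow, norm_I, norm_real, Real.norm_eq_abs,
    abs_of_nonneg (Real.sqrt_nonneg _), norm_ofNat, Nat.succ_eq_add_one]
  ring

theorem differentiableAt_summandShadow (m : ℕ) (hD : 0 < D) (hq : q ∈ QD D) (hz : 0 < z.im) :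
    DifferentiableAt ℂ (summandShadow m D q) z :=
  ((hasDerivAt_Qval q z).differentiableAt.zpow (.inl (Qval_ne_zero hD hq hz))).const_mul _

theorem hasShadowOn_Fsummand {U : Set ℂ} (hm : 1 ≤ m) (hD : 0 < D) (hq : q ∈ QD D)
    (hUim : ∀ z ∈ U, 0 < z.im) (hs : ∀ z ∈ U, Qell q z ≠ 0) :
    HasShadowOn U (2 * m) (Fsummand (m + 1) D · q) (summandShadow m D q) := fun z hz => by
  have hQ := Qval_ne_zero hD hq (hUim z hz)
  have hQ' : conj (Qval q z) ≠ 0 := (map_ne_zero _).2 hQ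
  refine ⟨_, (((hasWirtingerDerivAt_of_hasDerivAt ((hasDerivAt_Qval q z).pow m)).mul
    (hasWirtingerDerivAt_sign_mul_psi (by omega) hD hq (hUim z hz) (hs z hz))).congr_deriv rfl
      ?_).congr_of_eqOn isOpen_univ (Set.mem_univ z) fun w _ => Fsummand_eq _ D w q⟩
  rw [summandShadow, ← Nat.cast_succ, zpow_neg, zpow_natCast, Nat.succ_eq_add_one, psiArg]
  simp only [Pi.pow_apply, map_mul, map_neg, map_div₀, map_inv₀, map_pow, conj_I, conj_ofReal,
    conj_ofNat, ofReal_div, ofReal_mul, ofReal_pow, ofReal_intCast, ← mul_conj,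
    ← ofReal_sqrt_sq hD, Nat.add_sub_cancel, div_pow, mul_pow]
  field_simp
  ring

theorem hasIteratedWirDOn_Fsummand {U : Set ℂ} (hU : IsOpen U) (hm : 1 ≤ m) (hD : 0 < D)
    (hq : q ∈ QD D) (hUim : ∀ z ∈ U, 0 < z.im) (hs : ∀ z ∈ U, Qell q z ≠ 0) :
    HasIteratedWirDOn U (2 * m + 1) (Fsummand (m + 1) D · q)
      (fun z => (2 * m).factorial / (-4) ^ m * summandShadow m D q z) := by
  have hQ' (z : ℂ) : HasDerivAt (fun z : ℂ => 2 * q.1 * z + q.2.1) (2 * q.1) z := by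
    simpa using ((hasDerivAt_id' z).const_mul (2 * q.1 : ℂ)).add_const (q.2.1 : ℂ)
  have hbol := HasIteratedWirDOn.bol (s := range (2 * m + 1))
    (coeff := fun j => -(I / 2 * √D) / 4 ^ m * ((-1) ^ (j + m) * (2 * m).choose j))
    (ev := fun j => (j - m : ℤ) * √D) (eig := fun j z => formPhase D q z ^ (j - m : ℤ)) hU
    (fun z hz => Qval_ne_zero hD hq (hUim z hz))
    (fun z _ => hasDerivAt_Qval q z) (fun z _ => hQ' z) (fun z _ => discrim_Qval hq z)
    (fun j _ z hz => hasWirtingerDerivAt_formPhase_zpow hD hq (hUim z hz) (j - m))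
    (fun z hz => hasWirtingerDerivAt_sign_mul_psi_sum hm hD hq (hUim z hz) (hs z hz)) m
  have hpow : (-(√D : ℂ) ^ 2) ^ m / 4 ^ m = √D ^ (2 * m) / (-4) ^ m := by
    rw [← div_pow, pow_mul, ← div_pow, neg_div, div_neg]
  refine (hbol.congr_left hU fun z _ => Fsummand_eq (m + 1) D z q).congr_right fun z _ => ?_
  have hsum := sum_choose_mul_prod_mul_zpow m (√D : ℂ) (formPhase D q z)
  rw [ofReal_sqrt_sq hD] at hsum hpow
  dsimp only
  rw [summandShadow]
  simp only [mul_assoc, ← mul_sum] at hsum ⊢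
  rw [hsum]
  linear_combination (-(I / 2 * √D) * (2 * m).factorial * Qval q z ^ (-(m + 1) : ℤ)) * hpow

end Summand

section LocalPolynomialSeries

open Complex Metric

variable {k m : ℕ} {D : ℤ} {τ : ℂ}

theorem exists_ball_summable_norm_summand_le (hm : 1 ≤ m) (hD : 0 < D)
    (hDsq : ¬∃ n : ℤ, n ^ 2 = D) (hτ : 0 < τ.im) (hτE : ∀ q ∈ QD D, Qell q τ ≠ 0) :
    ∃ r > 0, ∃ M : QD D → ℝ, Summable M ∧ ∀ z ∈ ball τ r, 0 < z.im ∧ ∀ q : QD D,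
      Qell q.1 z ≠ 0 ∧ ‖Fsummand (m + 1) D z q‖ ≤ M q ∧ ‖summandShadow m D q z‖ ≤ M q := by
  obtain ⟨M, hM, hMle⟩ :=
    exists_summable_eventually_norm_inv_Qval_pow_le (k := m + 1) (by omega) hD hDsq hτ
  set C := (√D * (τ.im + 1)) ^ (2 * m + 1)
  have hnear := (eventually_forall_Qell_ne_zero hD hDsq hτ hτE).and <| hMle.and <|
    (continuous_im.continuousAt.eventually_const_lt hτ).and <|
      continuous_im.continuousAt.eventually_lt_const (lt_add_one τ.im)
  obtain ⟨r, hr, hball⟩ := eventually_nhds_iff_ball.1 hnear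
  refine ⟨r, hr, fun q => (C + √D ^ (2 * m + 1) / 2) * M q, hM.mul_left _, fun z hz => ?_⟩
  obtain ⟨hs, hMz, him, him_lt⟩ := hball z hz
  refine ⟨him, fun q => ⟨hs q q.2, ?_, ?_⟩⟩
  · calc ‖Fsummand (m + 1) D z q‖
        ≤ (√D * z.im) ^ (2 * m + 1) * ‖(Qval q.1 z)⁻¹‖ ^ (m + 1) :=
          norm_Fsummand_le (by omega) hD q.2 him (hs q q.2)
      _ ≤ C * ‖(Qval q.1 z)⁻¹‖ ^ (m + 1) := by
          gcongr
          exact pow_le_pow_left₀ (by positivity) (by gcongr) _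
      _ ≤ (C + √D ^ (2 * m + 1) / 2) * M q := by
          gcongr
          exacts [le_add_of_nonneg_right (by positivity), hMz q]
  · calc ‖summandShadow m D q z‖
        = √D ^ (2 * m + 1) / 2 * ‖(Qval q.1 z)⁻¹‖ ^ (m + 1) := norm_summandShadow m D q z
      _ ≤ (C + √D ^ (2 * m + 1) / 2) * M q := by
          gcongr
          exacts [le_add_of_nonneg_left (by positivity), hMz q]

theorem HasShadowOn.ofReal_mul {U : Set ℂ} {N : ℕ} {G g : ℂ → ℂ} (h : HasShadowOn U N G g) (c : ℝ) :
    HasShadowOn U N (fun z => c * G z) (fun z => c * g z) := fun z hz =>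
  (h z hz).elim fun a ha => ⟨c * a, (ha.const_mul c).congr_deriv rfl <| by
    rw [map_mul, conj_ofReal]
    ring⟩

theorem Dpow_natCast_sub_half (hD : 0 < D) (m : ℕ) :
    Dpow D ((m + 1 : ℕ) - 1 / 2) = √D ^ (2 * m + 1) := by
  rw [Dpow, ← ofReal_pow, Real.sqrt_eq_rpow, ← Real.rpow_mul_natCast (by positivity)]
  push_cast
  ring_nf

/-- The constant in front of the sum defining `F k D`. -/
noncomputable def normalization (k : ℕ) (D : ℤ) : ℝ :=
  (D : ℝ) ^ (1 / 2 - k : ℝ) / ((2 * k - 2).choose (k - 1) * Real.pi)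

theorem F_eq_normalization_mul_tsum (k : ℕ) (D : ℤ) :
    F k D = fun z => normalization k D * ∑' q : QD D, Fsummand k D z q := by
  ext z
  rw [F, normalization, Dpow, ofReal_div]

theorem normalization_mul_tsum_summandShadow (hD : 0 < D) (m : ℕ) (z : ℂ) :
    normalization (m + 1) D * ∑' q : QD D, summandShadow m D q z =
      -(I / 2) * (Dpow D (1 / 2 - (m + 1 : ℕ)) * fkD (m + 1) D z) := by
  simp only [summandShadow, tsum_mul_left]
  rw [normalization, fkD, Dpow_natCast_sub_half hD, ofReal_div, Dpow]
  push_cast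
  ring

theorem exists_ball_hasShadowOn_and_hasIteratedWirDOn_F (hm : 1 ≤ m) (hD : 0 < D)
    (hDsq : ¬∃ n : ℤ, n ^ 2 = D) (hτ : 0 < τ.im) (hτE : ∀ q ∈ QD D, Qell q τ ≠ 0) :
    ∃ r > 0, HasShadowOn (ball τ r) (2 * m) (F (m + 1) D)
        (fun z => -(I / 2) * (Dpow D (1 / 2 - (m + 1 : ℕ)) * fkD (m + 1) D z)) ∧
      HasIteratedWirDOn (ball τ r) (2 * m + 1) (F (m + 1) D) (fun z =>
        (2 * m).factorial / (-4) ^ m *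
          (-(I / 2) * (Dpow D (1 / 2 - (m + 1 : ℕ)) * fkD (m + 1) D z))) := by
  obtain ⟨r, hr, M, hM, hball⟩ := exists_ball_summable_norm_summand_le hm hD hDsq hτ hτE
  have him : ∀ z ∈ ball τ r, 0 < z.im := fun z hz => (hball z hz).1
  have hs (q : QD D) : ∀ z ∈ ball τ r, Qell q.1 z ≠ 0 := fun z hz => ((hball z hz).2 q).1
  have hFM (q : QD D) : ∀ z ∈ ball τ r, ‖Fsummand (m + 1) D z q‖ ≤ M q :=
    fun z hz => ((hball z hz).2 q).2.1
  have hgM (q : QD D) : ∀ z ∈ ball τ r, ‖summandShadow m D q z‖ ≤ M q :=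
    fun z hz => ((hball z hz).2 q).2.2
  have hg (q : QD D) : DifferentiableOn ℂ (summandShadow m D q) (ball τ r) := fun z hz =>
    (differentiableAt_summandShadow m hD q.2 (him z hz)).differentiableWithinAt
  have hshadow (q : QD D) := hasShadowOn_Fsummand hm hD q.2 him (hs q)
  have hiter (q : QD D) := hasIteratedWirDOn_Fsummand isOpen_ball hm hD q.2 him (hs q)
  simp only [← normalization_mul_tsum_summandShadow hD, F_eq_normalization_mul_tsum]
  refine ⟨r, hr, (HasShadowOn.tsum hM hFM hgM hg hshadow).ofReal_mul _,
    ((HasIteratedWirDOn.tsum hM hFM hgM hg hshadow hiter).const_mul _).congr_right fun z _ => ?_⟩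
  dsimp only
  rw [tsum_mul_left]
  ring

theorem HasShadowOn.xiOp_eq {U : Set ℂ} {G g : ℂ → ℂ} (h : HasShadowOn U (2 * m) G g) (hτU : τ ∈ U)
    (hτ : 0 < τ.im) : xiOp (m + 1) G τ = 2 * I * g τ := by
  obtain ⟨a, ha⟩ := h τ hτU
  have hpow : (τ.im : ℂ) ^ (2 - 2 * (m + 1 : ℕ) : ℤ) * (τ.im : ℂ) ^ (2 * m) = 1 := by
    rw [← zpow_natCast, ← zpow_add₀ (ofReal_ne_zero.2 hτ.ne')]
    convert zpow_zero _ using 2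
    push_cast
    ring
  rw [xiOp, ha.wirDbar_eq, map_mul, map_pow, conj_ofReal, conj_conj]
  linear_combination (2 * I * g τ) * hpow

theorem two_pi_I_pow_mul_neg_four_pow (m : ℕ) :
    (2 * Real.pi * I) ^ (2 * m + 1) * (-4) ^ m = (4 * Real.pi) ^ (2 * m + 1) * (I / 2) := by
  have hI : (I ^ 2 * (-4)) ^ m = 4 ^ m := by simp
  have h4 : (4 : ℂ) ^ (2 * m + 1) = 2 ^ (2 * m + 1) * (2 * 4 ^ m) := by
    rw [pow_succ, pow_succ (2 : ℂ), pow_mul, pow_mul, show (4 : ℂ) ^ 2 = 2 ^ 2 * 4 by norm_num,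
      mul_pow]
    ring
  simp only [mul_pow, h4, ← hI]
  ring

theorem one_div_two_pi_I_pow_mul (m : ℕ) (c X : ℂ) :
    (1 / (2 * Real.pi * I)) ^ (2 * m + 1) * (c / (-4) ^ m * (-(I / 2) * X)) =
      -(c / (4 * Real.pi) ^ (2 * m + 1)) * X := by
  calc _ = -(c * (I / 2) / ((2 * Real.pi * I) ^ (2 * m + 1) * (-4) ^ m)) * X := by
        rw [one_div, inv_pow]
        ring
    _ = _ := by
        rw [two_pi_I_pow_mul_neg_four_pow,
          mul_div_mul_right _ _ (div_ne_zero I_ne_zero two_ne_zero)]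

end LocalPolynomialSeries

theorem stmt5 (k : ℕ) (hk : 2 ≤ k) (D : ℤ) (hD : 0 < D)
    (hD4 : D % 4 = 0 ∨ D % 4 = 1) (hDsq : ¬∃ m : ℤ, m ^ 2 = D)
    (τ : ℂ) (hτ : 0 < τ.im) (hτE : ∀ q ∈ QD D, Qell q τ ≠ 0) :
    xiOp k (F k D) τ = Dpow D (1 / 2 - (k : ℝ)) * fkD k D τ ∧
    (Dop^[2 * k - 1] (F k D)) τ =
      -((Nat.factorial (2 * k - 2) : ℂ) / (((4 * Real.pi) ^ (2 * k - 1) : ℝ) : ℂ)) *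
        Dpow D (1 / 2 - (k : ℝ)) * fkD k D τ := by
  obtain ⟨m, rfl⟩ : ∃ m, k = m + 1 := ⟨k - 1, by omega⟩
  obtain ⟨r, hr, hshadow, hiter⟩ :=
    exists_ball_hasShadowOn_and_hasIteratedWirDOn_F (m := m) (by omega) hD hDsq hτ hτE
  have hτr := Metric.mem_ball_self (x := τ) hr
  constructor
  · rw [hshadow.xiOp_eq hτr hτ]
    linear_combination -(Dpow D (1 / 2 - (m + 1 : ℕ)) * fkD (m + 1) D τ) * Complex.I_sq
  · rw [show 2 * (m + 1) - 1 = 2 * m + 1 by omega, show 2 * (m + 1) - 2 = 2 * m by omega,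
      hiter.eqOn_iterate_Dop Metric.isOpen_ball hτr]
    dsimp only
    rw [one_div_two_pi_I_pow_mul]
    push_cast
    ring
end

section
/- For every τ = x + iy ∈ ℍ with x ≠ 0, one has ξ_{2−2k}(φ̂)(τ) = τ^{−k}, i.e. 2i·y^{2−2k}·conj((∂φ̂/∂τ̄)(τ)) = τ^{−k}. -/
/-!
The sign factors only turn `φ(arctan |y/x|)` into the odd function `φ ∘ arctan` of `y/x`, so near
a point off both axes `φ̂` is, up to a constant sign, the product of the holomorphic function
`τ^{k-1}` with the real function `φ(arctan (y/x))`. Hence `∂/∂τ̄` only sees the latter. Since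
`sin² (arctan (y/x)) = y²/|τ|²` and `∂/∂τ̄ (arctan (y/x)) = i/(2τ̄)`, it gives
`∂φ̂/∂τ̄ = ± (i/2) y^{2k-2} / τ̄^k`, and conjugation followed by multiplication with `2i y^{2-2k}`
leaves `± τ^{-k}`.
-/

open Complex
open scoped ComplexConjugate Filter Topology

theorem hasFDerivAt_ofReal_comp {E : Type*} [NormedAddCommGroup E] [NormedSpace ℝ E] {u : E → ℝ}
    {u' : E →L[ℝ] ℝ} {x : E} (hu : HasFDerivAt u u' x) :
    HasFDerivAt (fun z ↦ (u z : ℂ)) (ofRealCLM ∘L u') x :=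
  ofRealCLM.hasFDerivAt.comp x hu

theorem hasDerivAt_ofReal_add_mul_I (x y : ℝ) :
    HasDerivAt (fun t : ℝ ↦ (t : ℂ) + y * I) 1 x :=
  (hasDerivAt_id x).ofReal_comp.add_const _

theorem hasDerivAt_add_ofReal_mul_I (x y : ℝ) :
    HasDerivAt (fun t : ℝ ↦ (x : ℂ) + t * I) I y := by
  simpa using ((hasDerivAt_id y).ofReal_comp.mul_const I).const_add (x : ℂ)

section Wirtinger

variable {f g : ℂ → ℂ} {τ : ℂ}

theorem dxx_congr (h : g =ᶠ[𝓝 τ] f) : dxx g τ = dxx f τ :=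
  (h.comp_tendsto <| (hasDerivAt_ofReal_add_mul_I τ.re τ.im).continuousAt.tendsto.trans_eq <|
    congrArg 𝓝 (re_add_im τ)).deriv_eq

theorem dyy_congr (h : g =ᶠ[𝓝 τ] f) : dyy g τ = dyy f τ :=
  (h.comp_tendsto <| (hasDerivAt_add_ofReal_mul_I τ.re τ.im).continuousAt.tendsto.trans_eq <|
    congrArg 𝓝 (re_add_im τ)).deriv_eq

theorem wirDbar_congr (h : g =ᶠ[𝓝 τ] f) : wirDbar g τ = wirDbar f τ := by
  rw [wirDbar, wirDbar, dxx_congr h, dyy_congr h]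

theorem dxx_eq_fderiv (hf : DifferentiableAt ℝ f τ) : dxx f τ = fderiv ℝ f τ 1 :=
  (hf.hasFDerivAt.comp_hasDerivAt_of_eq τ.re (hasDerivAt_ofReal_add_mul_I τ.re τ.im)
    (re_add_im τ).symm).deriv

theorem dyy_eq_fderiv (hf : DifferentiableAt ℝ f τ) : dyy f τ = fderiv ℝ f τ I :=
  (hf.hasFDerivAt.comp_hasDerivAt_of_eq τ.im (hasDerivAt_add_ofReal_mul_I τ.re τ.im)
    (re_add_im τ).symm).deriv

theorem wirDbar_eq_fderiv (hf : DifferentiableAt ℝ f τ) :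
    wirDbar f τ = (fderiv ℝ f τ 1 + I * fderiv ℝ f τ I) / 2 := by
  rw [wirDbar, dxx_eq_fderiv hf, dyy_eq_fderiv hf]

theorem wirDbar_mul (hf : DifferentiableAt ℝ f τ) (hg : DifferentiableAt ℝ g τ) :
    wirDbar (fun z ↦ f z * g z) τ = f τ * wirDbar g τ + g τ * wirDbar f τ := by
  rw [wirDbar_eq_fderiv hf, wirDbar_eq_fderiv hg, wirDbar_eq_fderiv (hf.fun_mul hg),
    fderiv_fun_mul hf hg]
  simp only [add_apply, smul_apply, smul_eq_mul]
  ring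

theorem wirDbar_eq_zero_of_differentiableAt (hf : DifferentiableAt ℂ f τ) : wirDbar f τ = 0 := by
  have hI : fderiv ℂ f τ I = I * fderiv ℂ f τ 1 := by simp
  rw [wirDbar_eq_fderiv (hf.restrictScalars ℝ), hf.fderiv_restrictScalars ℝ]
  simp only [ContinuousLinearMap.coe_restrictScalars', hI]
  linear_combination fderiv ℂ f τ 1 / 2 * I_sq

theorem wirDbar_ofReal_comp {u : ℂ → ℝ} {φ : ℝ → ℝ} {φ' : ℝ} (hφ : HasDerivAt φ φ' (u τ))
    (hu : DifferentiableAt ℝ u τ) :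
    wirDbar (fun z ↦ (φ (u z) : ℂ)) τ = φ' * wirDbar (fun z ↦ (u z : ℂ)) τ := by
  have hu' := hasFDerivAt_ofReal_comp hu.hasFDerivAt
  have hφu : HasFDerivAt (fun z ↦ (φ (u z) : ℂ)) (ofRealCLM ∘L (φ' • fderiv ℝ u τ)) τ :=
    hasFDerivAt_ofReal_comp (hφ.comp_hasFDerivAt τ hu.hasFDerivAt)
  rw [wirDbar_eq_fderiv hu'.differentiableAt, hu'.fderiv,
    wirDbar_eq_fderiv hφu.differentiableAt, hφu.fderiv]
  simp only [ContinuousLinearMap.comp_apply, smul_apply, smul_eq_mul, ofRealCLM_apply, ofReal_mul]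
  ring

theorem wirDbar_im_div_re (hx : τ.re ≠ 0) :
    wirDbar (fun z ↦ ((z.im / z.re : ℝ) : ℂ)) τ = I * τ / (2 * τ.re ^ 2) := by
  have hdx : HasDerivAt (fun x : ℝ ↦ τ.im / x) (-τ.im / τ.re ^ 2) τ.re := by
    simpa using (hasDerivAt_const τ.re τ.im).fun_div (hasDerivAt_id τ.re) hx
  have hdy : HasDerivAt (fun y : ℝ ↦ y / τ.re) (1 / τ.re) τ.im :=
    (hasDerivAt_id τ.im).div_const τ.re
  have hdxx : dxx (fun z ↦ ((z.im / z.re : ℝ) : ℂ)) τ = ((-τ.im / τ.re ^ 2 : ℝ) : ℂ) := by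
    simpa [dxx] using hdx.ofReal_comp.deriv
  have hdyy : dyy (fun z ↦ ((z.im / z.re : ℝ) : ℂ)) τ = ((1 / τ.re : ℝ) : ℂ) := by
    simpa [dyy] using hdy.ofReal_comp.deriv
  have hx' : (τ.re : ℂ) ≠ 0 := ofReal_ne_zero.mpr hx
  rw [wirDbar, hdxx, hdyy]
  push_cast
  field_simp
  linear_combination I * re_add_im τ - τ.im * I_sq

end Wirtinger

theorem sign_mul_apply_abs_div {f : ℝ → ℝ} (hf : f.Odd) (x y : ℝ) :
    Real.sign x * f |y / x| = Real.sign y * f (y / x) := by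
  rcases lt_trichotomy x 0 with hx | rfl | hx
  all_goals rcases lt_trichotomy y 0 with hy | rfl | hy
  all_goals simp [*, hf.map_zero, hf _, Real.sign_of_neg, Real.sign_of_pos, abs_div, abs_of_neg,
    abs_of_pos, neg_div, div_neg]

theorem eventually_sign_eq {a : ℝ} (ha : a ≠ 0) : ∀ᶠ t in 𝓝 a, Real.sign t = Real.sign a := by
  rcases ha.lt_or_gt with ha | ha
  · filter_upwards [gt_mem_nhds ha] with t ht
    rw [Real.sign_of_neg ht, Real.sign_of_neg ha]
  · filter_upwards [lt_mem_nhds ha] with t ht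
    rw [Real.sign_of_pos ht, Real.sign_of_pos ha]

section Phi

theorem phi_odd (k : ℕ) : (phi k).Odd := fun v ↦ by
  have heven : Even (2 * k - 2) := ⟨k - 1, by lia⟩
  have h := intervalIntegral.integral_comp_neg (a := 0) (b := v) fun u ↦ Real.sin u ^ (2 * k - 2)
  simp only [Real.sin_neg, heven.neg_pow, neg_zero] at h
  rw [phi, phi, h, intervalIntegral.integral_symm]

theorem hasDerivAt_phi (k : ℕ) (v : ℝ) : HasDerivAt (phi k) (Real.sin v ^ (2 * k - 2)) v :=
  ((by fun_prop : Continuous fun u ↦ Real.sin u ^ (2 * k - 2)).integral_hasStrictDerivAt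
    0 v).hasDerivAt

theorem hasDerivAt_phi_arctan (n : ℕ) (t : ℝ) :
    HasDerivAt (fun s ↦ phi (n + 1) (Real.arctan s)) (t ^ (2 * n) / (1 + t ^ 2) ^ (n + 1)) t := by
  have hsin : Real.sin (Real.arctan t) ^ (2 * n) = t ^ (2 * n) / (1 + t ^ 2) ^ n := by
    rw [pow_mul, Real.sin_sq_arctan, div_pow, ← pow_mul]
  refine ((hasDerivAt_phi (n + 1) _).comp t (Real.hasDerivAt_arctan t)).congr_deriv ?_
  rw [show 2 * (n + 1) - 2 = 2 * n by lia, hsin]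
  field_simp
  ring

variable {τ : ℂ}

theorem differentiableAt_im_div_re (hx : τ.re ≠ 0) :
    DifferentiableAt ℝ (fun z : ℂ ↦ z.im / z.re) τ :=
  imCLM.differentiableAt.fun_mul (reCLM.differentiableAt.fun_inv hx)

theorem wirDbar_phi_arctan (n : ℕ) (hx : τ.re ≠ 0) :
    wirDbar (fun z ↦ (phi (n + 1) (Real.arctan (z.im / z.re)) : ℂ)) τ =
      I * τ * τ.im ^ (2 * n) / (2 * (τ * conj τ) ^ (n + 1)) := by
  have hx' : (τ.re : ℂ) ≠ 0 := ofReal_ne_zero.mpr hx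
  have hnorm : τ * conj τ = τ.re ^ 2 * (1 + (τ.im / τ.re) ^ 2) := by
    rw [mul_conj, normSq_apply]
    push_cast
    field_simp
  rw [wirDbar_ofReal_comp (hasDerivAt_phi_arctan n _) (differentiableAt_im_div_re hx),
    wirDbar_im_div_re hx, hnorm, mul_pow]
  push_cast
  rw [div_pow (τ.im : ℂ) τ.re (2 * n)]
  generalize 1 + ((τ.im : ℂ) / τ.re) ^ 2 = d
  field_simp
  ring

theorem phiHat_eq_sign_im_mul (k : ℕ) (τ : ℂ) :
    phiHat k τ =
      (Real.sign τ.im * τ ^ (k - 1)) * (phi k (Real.arctan (τ.im / τ.re)) : ℂ) := by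
  have hodd : (fun t ↦ phi k (Real.arctan t)).Odd := fun t ↦ by
    simp only [Real.arctan_neg, phi_odd k _]
  have hsign := congrArg ((↑) : ℝ → ℂ) (sign_mul_apply_abs_div hodd τ.re τ.im)
  push_cast at hsign
  rw [phiHat]
  linear_combination τ ^ (k - 1) * hsign

theorem wirDbar_phiHat (n : ℕ) (hx : τ.re ≠ 0) (hy : τ.im ≠ 0) :
    wirDbar (phiHat (n + 1)) τ =
      Real.sign τ.im * (I / 2 * τ.im ^ (2 * n) / conj τ ^ (n + 1)) := by
  have hhol : DifferentiableAt ℂ (fun z : ℂ ↦ Real.sign τ.im * z ^ n) τ := by fun_prop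
  have hreal : DifferentiableAt ℝ
      (fun z : ℂ ↦ (phi (n + 1) (Real.arctan (z.im / z.re)) : ℂ)) τ :=
    ofRealCLM.differentiableAt.comp τ
      ((hasDerivAt_phi_arctan n _).differentiableAt.comp τ (differentiableAt_im_div_re hx))
  have hlocal : phiHat (n + 1) =ᶠ[𝓝 τ] fun z ↦
      Real.sign τ.im * z ^ n * (phi (n + 1) (Real.arctan (z.im / z.re)) : ℂ) := by
    filter_upwards [continuous_im.continuousAt.eventually (eventually_sign_eq hy)] with z hz
    rw [phiHat_eq_sign_im_mul, hz, Nat.add_sub_cancel]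
  have hτ : τ ≠ 0 := fun h ↦ hx (by simp [h])
  rw [wirDbar_congr hlocal, wirDbar_mul (hhol.restrictScalars ℝ) hreal,
    wirDbar_eq_zero_of_differentiableAt hhol, wirDbar_phi_arctan n hx, mul_pow]
  field_simp
  ring

end Phi

theorem stmt6_general (k : ℕ) (hk : 1 ≤ k) (τ : ℂ) (hx : τ.re ≠ 0) (hy : τ.im ≠ 0) :
    xiOp k (phiHat k) τ = Real.sign τ.im * τ ^ (-(k : ℤ)) := by
  obtain ⟨n, rfl⟩ := Nat.exists_eq_add_of_le' hk
  have hpow : (τ.im : ℂ) ^ ((2 : ℤ) - 2 * ((n + 1 : ℕ) : ℤ)) = ((τ.im : ℂ) ^ (2 * n))⁻¹ := by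
    rw [← zpow_natCast, ← zpow_neg]
    congr 1
    push_cast
    ring
  have hy' : (τ.im : ℂ) ≠ 0 := ofReal_ne_zero.mpr hy
  rw [xiOp, wirDbar_phiHat n hx hy, hpow, zpow_neg, zpow_natCast]
  simp only [map_mul, map_div₀, map_pow, conj_I, conj_ofReal, conj_conj, map_ofNat]
  field_simp
  linear_combination -(Real.sign τ.im * (τ ^ (n + 1))⁻¹) * I_sq

theorem stmt6 (k : ℕ) (hk : 2 ≤ k) (τ : ℂ) (hτ : 0 < τ.im) (hx : τ.re ≠ 0) :
    xiOp k (phiHat k) τ = τ ^ (-(k : ℤ)) := by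
  simpa [Real.sign_of_pos hτ] using stmt6_general k (by lia) τ hx hτ.ne'
end
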